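/- arXiv:1702.08173 — 4 statements merged into one kernel-verified Lean document; each statement's English description precedes it below -/
import Mathlib

section
/- Let G be a torsion group containing an involution i whose centralizer C_G(i) is finite. Then either there exists an involution j in G that commutes with i and has finite conjugacy class, or every element g of G can be written as g = c·a where c ∈ C_G(i) and a is an element of G with finite conjugacy class (that is, G = C_G(i)·FC(G)). -/
namespace TGI

variable {G : Type*} [Group G]

def FC (p : G) : Prop := {x : G | IsConj p x}.Finite

theorem FC.mul {a b : G} (ha : FC a) (hb : FC b) : FC (a * b) := by
  refine (Set.Finite.image2 (fun x y => x * y) ha hb).subset ?_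
  intro x hx
  obtain ⟨c, rfl⟩ := isConj_iff.1 hx
  exact ⟨c * a * c⁻¹, isConj_iff.2 ⟨c, rfl⟩, c * b * c⁻¹, isConj_iff.2 ⟨c, rfl⟩, by group⟩

theorem FC.inv {a : G} (ha : FC a) : FC a⁻¹ := by
  refine (Set.Finite.image (fun x => x⁻¹) ha).subset ?_
  intro x hx
  obtain ⟨c, rfl⟩ := isConj_iff.1 hx
  exact ⟨c * a * c⁻¹, isConj_iff.2 ⟨c, rfl⟩, by group⟩

theorem FC.conj {a : G} (ha : FC a) (c : G) : FC (c * a * c⁻¹) := by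
  refine Set.Finite.subset ha ?_
  intro x hx
  exact (isConj_iff.2 ⟨c, rfl⟩ : IsConj a _).trans hx

theorem FC_of_finiteIndex (p : G) (h : (Subgroup.centralizer ({p} : Set G)).FiniteIndex) :
    FC p := by
  have hf : Finite (G ⧸ Subgroup.centralizer ({p} : Set G)) := inferInstance
  let f : G ⧸ Subgroup.centralizer ({p} : Set G) → G :=
    fun q => q.out * p * q.out⁻¹
  refine (Set.finite_range f).subset ?_
  intro x hx
  obtain ⟨c, rfl⟩ := isConj_iff.1 hx
  refine ⟨(c : G ⧸ Subgroup.centralizer ({p} : Set G)), ?_⟩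
  obtain ⟨⟨u, hu⟩, hu2⟩ :=
    QuotientGroup.mk_out_eq_mul (Subgroup.centralizer ({p} : Set G)) c
  have hu' := Subgroup.mem_centralizer_singleton_iff.1 hu
  simp only at hu2
  simp only [f]
  rw [hu2]
  have : u * p * u⁻¹ = p := by rw [hu']; group
  calc c * u * p * (c * u)⁻¹ = c * (u * p * u⁻¹) * c⁻¹ := by group
    _ = _ := by rw [this]

def Thin (S : Set G) : Prop := ∃ F : Set (G × G), F.Finite ∧ (∀ f ∈ F, ¬ FC f.1) ∧
  ∀ y ∈ S, ∃ f ∈ F, y * f.1 * y⁻¹ = f.2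

theorem Thin.union {S T : Set G} (hS : Thin S) (hT : Thin T) : Thin (S ∪ T) := by
  obtain ⟨F, h1, h2, h3⟩ := hS
  obtain ⟨F', h1', h2', h3'⟩ := hT
  refine ⟨F ∪ F', h1.union h1', ?_, ?_⟩
  · rintro f (h | h)
    exacts [h2 f h, h2' f h]
  · rintro y (h | h)
    · obtain ⟨f, hf, e⟩ := h3 y h
      exact ⟨f, Or.inl hf, e⟩
    · obtain ⟨f, hf, e⟩ := h3' y h
      exact ⟨f, Or.inr hf, e⟩

/-- preimage under left translation -/
theorem Thin.trans {S : Set G} (hS : Thin S) (d : G) : Thin {y | d * y ∈ S} := by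
  obtain ⟨F, h1, h2, h3⟩ := hS
  refine ⟨(fun f : G × G => (f.1, d⁻¹ * f.2 * d)) '' F, h1.image _, ?_, ?_⟩
  · rintro _ ⟨f, hf, rfl⟩
    exact h2 f hf
  · intro y hy
    obtain ⟨f, hf, e⟩ := h3 _ hy
    refine ⟨_, ⟨f, hf, rfl⟩, ?_⟩
    simp only
    rw [← e]; group

theorem Thin.iUnion {C : Set G} (hC : C.Finite) {S : G → Set G}
    (h : ∀ c ∈ C, Thin (S c)) : Thin {y | ∃ c ∈ C, y ∈ S c} := by
  induction C, hC using Set.Finite.induction_on with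
  | empty => exact ⟨∅, Set.finite_empty, by simp, by simp⟩
  | insert _ _ ih =>
    rename_i a s _ _
    have h1 := (h a (Set.mem_insert _ _)).union (ih fun c hc => h c (Set.mem_insert_of_mem _ hc))
    convert h1 using 1
    ext y
    simp

theorem Thin.mono {S T : Set G} (hT : Thin T) (h : S ⊆ T) : Thin S := by
  obtain ⟨F, h1, h2, h3⟩ := hT
  exact ⟨F, h1, h2, fun y hy => h3 y (h hy)⟩

open scoped Pointwise in
theorem not_small_univ {S : Set G} (hS : Thin S) : ∃ g, g ∉ S := by
  by_contra! hall
  obtain ⟨F, h1, h2, h3⟩ := hS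
  classical
  let g : G × G → G := fun f => if h : ∃ y : G, y * f.1 * y⁻¹ = f.2 then h.choose else 1
  have hg : ∀ f : G × G, ∀ y : G, y * f.1 * y⁻¹ = f.2 → g f * f.1 * (g f)⁻¹ = f.2 := by
    intro f y hy
    have h : ∃ y : G, y * f.1 * y⁻¹ = f.2 := ⟨y, hy⟩
    simp only [g, dif_pos h]
    exact h.choose_spec
  have hc : ⋃ f ∈ h1.toFinset, g f • ((Subgroup.centralizer ({f.1} : Set G) : Subgroup G) : Set G)
      = Set.univ := by
    refine Set.eq_univ_of_forall fun y => ?_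
    obtain ⟨f, hf, e⟩ := h3 y (hall y)
    simp only [Set.mem_iUnion]
    refine ⟨f, h1.mem_toFinset.2 hf, ?_⟩
    rw [Set.mem_smul_set_iff_inv_smul_mem, SetLike.mem_coe,
      Subgroup.mem_centralizer_singleton_iff, smul_eq_mul]
    have e' := hg f y e
    have e2 : y * f.1 = f.2 * y := by rw [← e]; group
    have e3 : (g f)⁻¹ * f.2 = f.1 * (g f)⁻¹ := by rw [← e']; group
    rw [mul_assoc, e2, ← mul_assoc, e3, mul_assoc]
  obtain ⟨k, hk, hk2⟩ := Subgroup.exists_finiteIndex_of_leftCoset_cover hc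
  exact h2 k (h1.mem_toFinset.1 hk) (FC_of_finiteIndex _ hk2)

/-- If `i` inverts `x`, then it inverts its powers. -/
theorem inv_pow' {i x : G} (hi : i * i = 1) (h : i * x * i = x⁻¹) (n : ℕ) :
    i * x ^ n * i = (x ^ n)⁻¹ := by
  have hi' : i⁻¹ = i := inv_eq_of_mul_eq_one_left hi
  have := conj_pow (i := n) (a := i) (b := x)
  rw [hi', h] at this
  rw [← this, inv_pow]

theorem key {i : G} (hG : Monoid.IsTorsion G) (hi : i * i = 1) (g : G) :
    (∃ z w : G, z ≠ 1 ∧ z ^ 2 = 1 ∧ z * i = i * z ∧ w * i = i * w ∧ g * z * g⁻¹ = w) ∨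
    ∃ c y : G, c * i = i * c ∧ i * y * i = y⁻¹ ∧ g = c * y := by
  have hi' : i⁻¹ = i := inv_eq_of_mul_eq_one_left hi
  obtain ⟨t, ht⟩ : ∃ t, t = g⁻¹ * i * g := ⟨_, rfl⟩
  have htt : t * t = 1 := by
    rw [ht]
    calc g⁻¹ * i * g * (g⁻¹ * i * g) = g⁻¹ * (i * i) * g := by group
      _ = 1 := by rw [hi]; group
  have ht' : t⁻¹ = t := inv_eq_of_mul_eq_one_left htt
  have hx : i * (i * t) * i = (i * t)⁻¹ := by
    rw [mul_inv_rev, ht', hi', ← mul_assoc, hi, one_mul]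
  have hx2 : t * (i * t) * t = (i * t)⁻¹ := by
    rw [mul_inv_rev, ht', hi', mul_assoc, mul_assoc, htt, mul_one]
  obtain ⟨x, rfl⟩ : ∃ x, x = i * t := ⟨_, rfl⟩
  have hpos : 0 < orderOf (i * t) := (hG (i * t)).orderOf_pos
  rcases Nat.even_or_odd' (orderOf (i * t)) with ⟨m, hm | hm⟩
  · left
    have hz2 : ((i * t) ^ m) ^ 2 = 1 := by
      rw [← pow_mul, mul_comm m 2, ← hm, pow_orderOf_eq_one]
    have hzi : ((i * t) ^ m)⁻¹ = (i * t) ^ m :=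
      inv_eq_of_mul_eq_one_left (by rw [← pow_two, hz2])
    have h1 := inv_pow' hi hx m
    have h2 := inv_pow' htt hx2 m
    have hne : (i * t) ^ m ≠ 1 := pow_ne_one_of_lt_orderOf (by omega) (by omega)
    rw [hzi] at h1 h2
    generalize (i * t) ^ m = z at *
    have h1' : z * i = i * z := by
      calc z * i = i * z * i * i := by rw [h1]
        _ = i * z := by rw [mul_assoc, hi, mul_one]
    have h2' : z * t = t * z := by
      calc z * t = t * z * t * t := by rw [h2]
        _ = t * z := by rw [mul_assoc, htt, mul_one]
    refine ⟨z, g * z * g⁻¹, hne, hz2, h1', ?_, rfl⟩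
    calc g * z * g⁻¹ * i = g * (z * (g⁻¹ * i * g)) * g⁻¹ := by group
      _ = g * ((g⁻¹ * i * g) * z) * g⁻¹ := by rw [← ht, h2']
      _ = _ := by group
  · right
    have h1 := inv_pow' hi hx m
    have hx1 : (i * t) ^ m * (i * t) ^ m * (i * t) = 1 := by
      rw [← pow_add, ← pow_succ, ← two_mul, ← hm, pow_orderOf_eq_one]
    generalize (i * t) ^ m = y at *
    refine ⟨g * y, y⁻¹, ?_, ?_, by group⟩
    · -- y * i = t * y
      have a1 : y * i = i * y⁻¹ := by
        rw [← h1, ← mul_assoc, ← mul_assoc, hi, one_mul]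
      have a2 : i * t = y⁻¹ * y⁻¹ := by
        rw [← mul_inv_rev]; exact eq_inv_of_mul_eq_one_right hx1
      have a3 : t = i * (y⁻¹ * y⁻¹) := by rw [← a2, ← mul_assoc, hi, one_mul]
      have a4 : t * y = i * y⁻¹ := by rw [a3]; group
      rw [mul_assoc, a1, ← a4, ht]; group
    · rw [← h1]
      have := congrArg (·⁻¹) h1
      simp only [mul_inv_rev, hi', inv_inv] at this
      rw [h1, inv_inv, mul_assoc, this]

theorem comm_step {i a y c y' : G} (hi : i * i = 1) (ha : i * a * i = a⁻¹)
    (hy : i * y * i = y⁻¹) (hc : c * i = i * c) (hy' : i * y' * i = y'⁻¹)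
    (h : a * y = c * y') : y * (a * c) * y⁻¹ = c⁻¹ * a := by
  have e1 : a⁻¹ * y⁻¹ = i * (a * y) * i := by
    rw [← ha, ← hy]
    calc i * a * i * (i * y * i) = i * a * (i * i) * y * i := by group
      _ = _ := by rw [hi]; group
  have e2 : i * (c * y') * i = c * y'⁻¹ := by
    rw [← hy', ← mul_assoc, ← hc]; group
  have e3 : y' = c⁻¹ * (a * y) := by rw [h]; group
  rw [h, e2, e3] at e1
  have e4 : y * a = c⁻¹ * a * y * c⁻¹ := by
    have := congrArg (·⁻¹) e1
    simp only [mul_inv_rev, inv_inv] at this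
    rw [this]; group
  rw [← mul_assoc, e4]; group

end TGI

open TGI in
/-- If a torsion group `G` contains an involution `i` with finite centralizer, then
either there is an involution commuting with `i` whose conjugacy class is finite, or
`G = C_G(i) · FC(G)`. -/
theorem torsion_group_involution_finite_centralizer_FC {G : Type*} [Group G]
    (hG : Monoid.IsTorsion G) (i : G) (hi1 : i ≠ 1) (hi2 : i ^ 2 = 1)
    (hfin : (Subgroup.centralizer {i} : Set G).Finite) :
    (∃ j : G, j ≠ 1 ∧ j ^ 2 = 1 ∧ Commute j i ∧ {x : G | IsConj j x}.Finite) ∨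
    (∀ g : G, ∃ c a : G, c ∈ Subgroup.centralizer ({i} : Set G) ∧
      {x : G | IsConj a x}.Finite ∧ g = c * a) := by
  by_cases hj : ∃ j : G, j ≠ 1 ∧ j ^ 2 = 1 ∧ Commute j i ∧ {x : G | IsConj j x}.Finite
  · exact Or.inl hj
  right
  have hi : i * i = 1 := by rw [← pow_two, hi2]
  have mem : ∀ c : G, c ∈ Subgroup.centralizer ({i} : Set G) ↔ c * i = i * c := fun c =>
    Subgroup.mem_centralizer_singleton_iff
  let X : Set G := {g | ∃ z w : G, z ≠ 1 ∧ z ^ 2 = 1 ∧ z * i = i * z ∧ w * i = i * w ∧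
    g * z * g⁻¹ = w}
  have hX : Thin X := by
    refine ⟨{f | f ∈ (Subgroup.centralizer {i} : Set G) ×ˢ (Subgroup.centralizer {i} : Set G) ∧
      f.1 ≠ 1 ∧ f.1 ^ 2 = 1}, (hfin.prod hfin).subset fun f hf => hf.1, ?_, ?_⟩
    · rintro f ⟨hf, h1, h2⟩ h3
      exact hj ⟨f.1, h1, h2, (mem _).1 hf.1, h3⟩
    · rintro y ⟨z, w, h1, h2, h3, h4, h5⟩
      exact ⟨(z, w), ⟨⟨(mem _).2 h3, (mem _).2 h4⟩, h1, h2⟩, h5⟩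
  have hInv : ∀ a : G, i * a * i = a⁻¹ → ∃ c, c * i = i * c ∧ FC (a * c) := by
    intro a ha
    by_contra! hno
    let Y : Set G := {y | a * y ∈ X} ∪ {y | ∃ c ∈ (Subgroup.centralizer {i} : Set G),
      y ∈ {y : G | y * (a * c) * y⁻¹ = c⁻¹ * a}}
    have hY : Thin Y := by
      refine (hX.trans a).union (Thin.iUnion hfin fun c hc => ?_)
      exact ⟨{(a * c, c⁻¹ * a)}, Set.finite_singleton _, by
        rintro _ rfl; exact hno c ((mem _).1 hc), fun y hy => ⟨_, rfl, hy⟩⟩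
    have hZ : Thin (X ∪ {g | ∃ d ∈ (Subgroup.centralizer {i} : Set G), g ∈ {y | d⁻¹ * y ∈ Y}}) :=
      hX.union (Thin.iUnion hfin fun d _ => hY.trans d⁻¹)
    obtain ⟨g, hg⟩ := not_small_univ hZ
    apply hg
    rcases key hG hi g with h | ⟨d, y, hd, hy, rfl⟩
    · exact Or.inl h
    · refine Or.inr ⟨d, (mem _).2 hd, ?_⟩
      simp only [Set.mem_setOf_eq, inv_mul_cancel_left]
      rcases key hG hi (a * y) with h | ⟨c, y', hc, hy', h⟩
      · exact Or.inl h
      · exact Or.inr ⟨c, (mem _).2 hc, comm_step hi ha hy hc hy' h⟩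
  have hgen : ∀ g, g ∉ X → ∃ c a : G, c ∈ Subgroup.centralizer ({i} : Set G) ∧
      FC a ∧ g = c * a := by
    intro g hg
    rcases key hG hi g with h | ⟨d, y, hd, hy, rfl⟩
    · exact absurd h hg
    · obtain ⟨c, hc, hf⟩ := hInv y hy
      refine ⟨d * c⁻¹, c * (y * c) * c⁻¹, mul_mem ((mem _).2 hd) (inv_mem ((mem _).2 hc)),
        hf.conj c, by group⟩
  intro g
  obtain ⟨h, hh⟩ := not_small_univ (hX.union (hX.trans g))
  obtain ⟨c, a, hc, ha, e⟩ := hgen h fun h' => hh (Or.inl h')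
  obtain ⟨c', a', hc', ha', e'⟩ := hgen (g * h) fun h' => hh (Or.inr h')
  refine ⟨c' * c⁻¹, c * (a' * a⁻¹) * c⁻¹, mul_mem hc' (inv_mem hc), (ha'.mul ha.inv).conj c, ?_⟩
  have : g = (g * h) * h⁻¹ := by group
  rw [this, e', e]; group
end

section
/- There is no infinite simple torsion group containing an involution with finite centralizer; that is, if G is a torsion group that is simple and contains an involution i such that the centralizer C_G(i) is finite, then G is finite. -/
open scoped Pointwise in
theorem cover_aux {G : Type*} [Group G] (P : Set (G × G)) (hP : P.Finite)
    (h1 : ∀ p ∈ P, p.1 ≠ 1) (hc : ∀ g : G, ∃ p ∈ P, g * p.1 * g⁻¹ = p.2) :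
    ∃ z : G, z ≠ 1 ∧ (Subgroup.centralizer {z}).FiniteIndex := by
  classical
  let Q : Set (G × G) := {p ∈ P | ∃ g : G, g * p.1 * g⁻¹ = p.2}
  have hQ : Q.Finite := hP.subset (fun p hp => hp.1)
  have hex : ∀ p : G × G, ∃ g : G, p ∈ Q → g * p.1 * g⁻¹ = p.2 := by
    intro p
    by_cases hp : p ∈ Q
    · obtain ⟨g, hg⟩ := hp.2
      exact ⟨g, fun _ => hg⟩
    · exact ⟨1, fun h => absurd h hp⟩
  choose f hf using hex
  have hcov : ⋃ p ∈ hQ.toFinset, f p • (Subgroup.centralizer {p.1} : Set G) = Set.univ := by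
    rw [Set.eq_univ_iff_forall]
    intro g
    obtain ⟨p, hp, hg⟩ := hc g
    have hpQ : p ∈ Q := ⟨hp, g, hg⟩
    have h2 := hf p hpQ
    simp only [Set.mem_iUnion]
    refine ⟨p, by simpa using hpQ, ?_⟩
    rw [mem_leftCoset_iff, SetLike.mem_coe, Subgroup.mem_centralizer_singleton_iff]
    rw [← hg] at h2
    have h3 : f p * p.1 = g * p.1 * g⁻¹ * f p := by rw [← h2]; group
    have h4 : p.1 = (f p)⁻¹ * (g * p.1 * g⁻¹ * f p) := by rw [← h3]; group
    have h5 : p.1 * ((f p)⁻¹ * g) = ((f p)⁻¹ * (g * p.1 * g⁻¹ * f p)) * ((f p)⁻¹ * g) := by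
      rw [← h4]
    first
      | (rw [h5]; group)
      | (symm; rw [h5]; group)
  obtain ⟨p, hp, hfi⟩ := Subgroup.exists_finiteIndex_of_leftCoset_cover hcov
  have hpQ : p ∈ Q := by simpa using hp
  exact ⟨p.1, h1 p hpQ.1, hfi⟩

theorem decomp_aux {G : Type*} [Group G] (hG : Monoid.IsTorsion G) (i : G) (hi : i * i = 1)
    (g : G) :
    (∃ z w : G, z ≠ 1 ∧ z * i = i * z ∧ w * i = i * w ∧ g * z * g⁻¹ = w) ∨
    (∃ c x : G, c * i = i * c ∧ g = c * x ∧ x * i * x = i) := by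
  have hinv : i⁻¹ = i := inv_eq_of_mul_eq_one_left hi
  set j := g⁻¹ * i * g with hj
  have hjj : j * j = 1 := by
    calc j * j = g⁻¹ * (i * i) * g := by rw [hj]; group
      _ = 1 := by rw [hi]; group
  have hjinv : j⁻¹ = j := inv_eq_of_mul_eq_one_left hjj
  set t := i * j with ht
  have hti : SemiconjBy i t t⁻¹ := by
    show i * t = t⁻¹ * i
    rw [ht, mul_inv_rev, hinv, hjinv, mul_assoc, hi, ← mul_assoc, hi]; simp
  have htj : SemiconjBy j t t⁻¹ := by
    show j * t = t⁻¹ * j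
    rw [ht, mul_inv_rev, hinv, hjinv]; simp only [mul_assoc]
  have hpos : 0 < orderOf t := (hG t).orderOf_pos
  rcases Nat.even_or_odd' (orderOf t) with ⟨k, hk | hk⟩
  · left
    have hk0 : 0 < k := by omega
    have hz1 : t ^ k ≠ 1 := pow_ne_one_of_lt_orderOf hk0.ne' (by omega)
    have hzz : t ^ k * t ^ k = 1 := by rw [← pow_add, ← two_mul, ← hk, pow_orderOf_eq_one]
    have hzinv : (t⁻¹) ^ k = t ^ k := by
      rw [inv_pow]; exact inv_eq_of_mul_eq_one_left hzz
    have h1 : i * t ^ k = t ^ k * i := by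
      have := hti.pow_right k
      rw [hzinv] at this
      exact this
    have h2 : j * t ^ k = t ^ k * j := by
      have := htj.pow_right k
      rw [hzinv] at this
      exact this
    refine ⟨t ^ k, g * t ^ k * g⁻¹, hz1, h1.symm, ?_, rfl⟩
    have hig : i = g * j * g⁻¹ := by rw [hj]; group
    calc g * t ^ k * g⁻¹ * i = g * t ^ k * g⁻¹ * (g * j * g⁻¹) := by rw [← hig]
      _ = g * (t ^ k * j) * g⁻¹ := by group
      _ = g * (j * t ^ k) * g⁻¹ := by rw [h2]
      _ = (g * j * g⁻¹) * (g * t ^ k * g⁻¹) := by group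
      _ = _ := by rw [← hig]
  · right
    obtain ⟨u, hu⟩ : ∃ u, u = t ^ (k + 1) := ⟨_, rfl⟩
    have huu : u * u = t := by
      rw [hu, ← pow_add, show k + 1 + (k + 1) = (2 * k + 1) + 1 by ring, ← hk, pow_succ,
        pow_orderOf_eq_one, one_mul]
    have hui : i * u = u⁻¹ * i := by
      have := hti.pow_right (k + 1)
      rw [inv_pow, ← hu] at this
      exact this
    refine ⟨g * u⁻¹, u, ?_, by group, ?_⟩
    · have e1 : u⁻¹ * i = j * u⁻¹ := by
        rw [← hui]
        have : j = i * u * u := by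
          rw [mul_assoc, huu, ht, ← mul_assoc, hi, one_mul]
        rw [this]; group
      rw [mul_assoc, e1, hj]; group
    · rw [mul_assoc, hui]; group

/-- There is no infinite simple torsion group containing an involution with finite
centralizer. -/
theorem simple_torsion_group_involution_finite_centralizer_finite {G : Type*} [Group G]
    (hG : Monoid.IsTorsion G) [IsSimpleGroup G] (i : G) (hi1 : i ≠ 1) (hi2 : i ^ 2 = 1)
    (hfin : (Subgroup.centralizer {i} : Set G).Finite) :
    Finite G := by
  have hi : i * i = 1 := by rw [← sq, hi2]
  have hmem : ∀ x : G, x * i = i * x → x ∈ (Subgroup.centralizer {i} : Set G) := by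
    intro x hx
    rw [SetLike.mem_coe, Subgroup.mem_centralizer_singleton_iff]
    first
      | exact hx
      | exact hx.symm
  set C : Set G := (Subgroup.centralizer {i} : Set G) with hC
  by_cases hall : ∀ a : G, a ∈ C
  · exact Set.finite_univ_iff.mp (hfin.subset (fun a _ => hall a))
  push Not at hall
  obtain ⟨a, ha⟩ := hall
  obtain ⟨z, hz1, hzfi⟩ : ∃ z : G, z ≠ 1 ∧ (Subgroup.centralizer {z}).FiniteIndex := by
    have hCC : (C ×ˢ C).Finite := hfin.prod hfin
    have hCCC : (C ×ˢ (C ×ˢ C)).Finite := hfin.prod hCC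
    refine cover_aux ({p ∈ C ×ˢ C | p.1 ≠ 1} ∪
      {p ∈ (fun q : G × G × G => (q.1, q.2.2 * a⁻¹ * q.2.1 * a * q.2.2⁻¹)) '' (C ×ˢ (C ×ˢ C)) |
        p.1 ≠ 1} ∪
      (fun q : G × G => (i * (q.1⁻¹ * a) * i, q.2 * (q.1⁻¹ * a)⁻¹ * q.2⁻¹)) '' (C ×ˢ C))
      (((hCC.subset (fun p hp => hp.1)).union ((hCCC.image _).subset (fun p hp => hp.1))).union
        (hCC.image _)) ?_ ?_
    · rintro p ((hp | hp) | ⟨⟨d, c⟩, ⟨hd, -⟩, rfl⟩)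
      · exact hp.2
      · exact hp.2
      · intro h
        apply ha
        have : a = d := by
          have h' : d⁻¹ * a = i * (i * (d⁻¹ * a) * i) * i := by
            calc d⁻¹ * a = (i * i) * (d⁻¹ * a) * (i * i) := by rw [hi]; group
              _ = _ := by group
          simp only at h
          rw [h, mul_one, hi] at h'
          exact (inv_mul_eq_one.mp h').symm
        rw [this]; exact hd
    · intro g
      rcases decomp_aux hG i hi g with ⟨z, w, hz, hzi, hwi, h⟩ | ⟨c, x, hc, hg, hx⟩
      · exact ⟨(z, w), Or.inl (Or.inl ⟨⟨hmem z hzi, hmem w hwi⟩, hz⟩), h⟩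
      · rcases decomp_aux hG i hi (a * x) with ⟨z, w, hz, hzi, hwi, h⟩ | ⟨d, y, hd, hy, hyi⟩
        · refine ⟨(z, c * a⁻¹ * w * a * c⁻¹), Or.inl (Or.inr ⟨⟨(z, w, c),
            ⟨hmem z hzi, hmem w hwi, hmem c hc⟩, rfl⟩, hz⟩), ?_⟩
          simp only
          rw [← h, hg]; group
        · refine ⟨_, Or.inr ⟨(d, c), ⟨hmem d hd, hmem c hc⟩, rfl⟩, ?_⟩
          simp only
          obtain ⟨b, hb⟩ : ∃ b, b = d⁻¹ * a := ⟨_, rfl⟩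
          have hyb : y = b * x := by rw [hb, mul_assoc, hy]; group
          rw [← hb, hg]
          have hxi : x * i = i * x⁻¹ := eq_mul_inv_of_mul_eq hx
          have hk : x * (i * b * i) * x⁻¹ = b⁻¹ := by
            rw [hyb] at hyi
            have e2 : x * i * (b * x) = b⁻¹ * i := by
              have : x * i * (b * x) = b⁻¹ * (b * x * i * (b * x)) := by group
              rw [this, hyi]
            have e5 : i * x⁻¹ = x * i := hxi.symm
            calc x * (i * b * i) * x⁻¹ = x * i * b * (i * x⁻¹) := by group
              _ = x * i * (b * x) * i := by rw [e5]; group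
              _ = b⁻¹ := by rw [e2, mul_assoc, hi, mul_one]
          calc c * x * (i * b * i) * (c * x)⁻¹ = c * (x * (i * b * i) * x⁻¹) * c⁻¹ := by group
            _ = _ := by rw [hk]
  have hN : (Subgroup.centralizer {z}).normalCore.FiniteIndex := inferInstance
  rcases (Subgroup.normalCore_normal (Subgroup.centralizer {z})).eq_bot_or_eq_top with h | h
  · rw [h] at hN
    have := hN.index_ne_zero
    rw [Subgroup.index_bot] at this
    exact Nat.finite_of_card_ne_zero this
  · exfalso
    have htop : Subgroup.centralizer {z} = ⊤ :=
      top_le_iff.mp (h ▸ Subgroup.normalCore_le _)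
    have hzc : z ∈ Subgroup.center G := by
      rw [Subgroup.mem_center_iff]
      intro g
      have : g ∈ Subgroup.centralizer {z} := htop ▸ Subgroup.mem_top g
      rw [Subgroup.mem_centralizer_singleton_iff] at this
      first
        | exact this
        | exact this.symm
    rcases (inferInstance : (Subgroup.center G).Normal).eq_bot_or_eq_top with h' | h'
    · rw [h', Subgroup.mem_bot] at hzc
      exact hz1 hzc
    · apply ha
      apply hmem
      have : i ∈ Subgroup.center G := h' ▸ Subgroup.mem_top i
      exact Subgroup.mem_center_iff.mp this a
end

section
/- There exists a function f : ℕ × ℕ → ℕ such that for all natural numbers n and m ≥ 1 the following holds: if G is a group satisfying g^m = 1 for every g ∈ G (exponent at most m) and α is an automorphism of G with α ∘ α = id such that Fix(α) has at most n elements, then the subgroup [G,α] has index at most n in G and the derived subgroup of [G,α] has order at most f(n,m). -/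
open Pointwise

section PartOne
variable {G : Type*} [Group G]

/-- Covered by finitely many left cosets of subgroups of infinite index. -/
def SmallSet (X : Set G) : Prop :=
  ∃ s : Finset (G × Subgroup G), (∀ p ∈ s, ¬ p.2.FiniteIndex) ∧
    X ⊆ ⋃ p ∈ s, p.1 • (p.2 : Set G)

lemma SmallSet.mono {X Y : Set G} (h : SmallSet Y) (hXY : X ⊆ Y) : SmallSet X := by
  obtain ⟨s, hs, hY⟩ := h
  exact ⟨s, hs, hXY.trans hY⟩

lemma SmallSet.empty : SmallSet (∅ : Set G) := ⟨∅, by simp, by simp⟩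

lemma SmallSet.union {X Y : Set G} (hX : SmallSet X) (hY : SmallSet Y) : SmallSet (X ∪ Y) := by
  classical
  obtain ⟨s, hs, hX⟩ := hX
  obtain ⟨t, ht, hY⟩ := hY
  refine ⟨s ∪ t, ?_, ?_⟩
  · intro p hp
    rcases Finset.mem_union.1 hp with h | h
    · exact hs p h
    · exact ht p h
  · rw [Finset.set_biUnion_union]
    exact Set.union_subset_union hX hY

lemma SmallSet.biUnion {ι : Type*} {s : Set ι} (hs : s.Finite) {f : ι → Set G}
    (h : ∀ i ∈ s, SmallSet (f i)) : SmallSet (⋃ i ∈ s, f i) := by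
  induction s, hs using Set.Finite.induction_on with
  | empty => simpa using SmallSet.empty
  | @insert a s _ _ ih =>
    rw [Set.biUnion_insert]
    exact (h a (by simp)).union (ih fun i hi => h i (by simp [hi]))

lemma SmallSet.smul {X : Set G} (hX : SmallSet X) (g : G) : SmallSet (g • X) := by
  classical
  obtain ⟨s, hs, hX⟩ := hX
  refine ⟨s.image (fun p => (g * p.1, p.2)), ?_, ?_⟩
  · intro p hp
    obtain ⟨q, hq, rfl⟩ := Finset.mem_image.1 hp
    exact hs q hq
  · rintro _ ⟨x, hx, rfl⟩
    have := hX hx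
    simp only [Set.mem_iUnion] at this ⊢
    obtain ⟨p, hp, hxp⟩ := this
    refine ⟨(g * p.1, p.2), Finset.mem_image_of_mem _ hp, ?_⟩
    show g • x ∈ (g * p.1) • (p.2 : Set G)
    rw [mul_smul]
    exact Set.smul_mem_smul_set hxp

lemma SmallSet.coset {X : Set G} (H : Subgroup G) (hH : ¬ H.FiniteIndex)
    (h : ∀ x ∈ X, ∀ y ∈ X, x⁻¹ * y ∈ H) : SmallSet X := by
  rcases X.eq_empty_or_nonempty with rfl | ⟨x, hx⟩
  · exact SmallSet.empty
  · refine ⟨{(x, H)}, by simpa using hH, ?_⟩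
    intro y hy
    simpa [Set.mem_smul_set_iff_inv_smul_mem] using h x hx y hy

lemma SmallSet.ne_univ : ¬ SmallSet (Set.univ : Set G) := by
  rintro ⟨s, hs, h⟩
  have h' : ⋃ i ∈ s, (fun p : G × Subgroup G => p.1) i •
      (((fun p : G × Subgroup G => p.2) i : Subgroup G) : Set G) = Set.univ :=
    Set.univ_subset_iff.1 h
  obtain ⟨k, hk, hk'⟩ := Subgroup.exists_finiteIndex_of_leftCoset_cover h'
  exact hs k hk hk'

lemma mem_centralizer_one {x g : G} : g ∈ Subgroup.centralizer {x} ↔ g * x = x * g := by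
  rw [Subgroup.mem_centralizer_singleton_iff]

/-- The FC-centre. -/
def fcc (G : Type*) [Group G] : Subgroup G where
  carrier := {g | (Subgroup.centralizer {g}).FiniteIndex}
  one_mem' := by
    have : Subgroup.centralizer {(1 : G)} = ⊤ := by
      ext; simp [mem_centralizer_one]
    simp only [Set.mem_ofPred_eq, this]; infer_instance
  mul_mem' := by
    intro a b ha hb
    simp only [Set.mem_ofPred_eq] at *
    refine Subgroup.finiteIndex_of_le (H := Subgroup.centralizer {a} ⊓ Subgroup.centralizer {b}) ?_
    rintro g ⟨h1, h2⟩
    replace h1 := mem_centralizer_one.1 h1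
    replace h2 := mem_centralizer_one.1 h2
    rw [mem_centralizer_one]
    rw [← mul_assoc, h1, mul_assoc, h2, mul_assoc]
  inv_mem' := by
    intro a ha
    simp only [Set.mem_ofPred_eq] at *
    refine Subgroup.finiteIndex_of_le (H := Subgroup.centralizer {a}) ?_
    intro g h1
    simp only [mem_centralizer_one] at h1 ⊢
    exact (Commute.inv_right (show Commute g a from h1))

lemma mem_fcc {g : G} : g ∈ fcc G ↔ (Subgroup.centralizer {g}).FiniteIndex := Iff.rfl

lemma index_centralizer_map (φ : G ≃* G) (g : G) :
    (Subgroup.centralizer {φ g}).index = (Subgroup.centralizer {g}).index := by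
  have : Subgroup.centralizer {φ g} = (Subgroup.centralizer {g}).map φ.toMonoidHom := by
    ext x
    rw [Subgroup.mem_map_equiv, mem_centralizer_one, mem_centralizer_one]
    constructor
    · intro h; apply φ.injective; simpa using h
    · intro h; simpa using congrArg φ h
  rw [this]
  exact Subgroup.index_map_equiv (Subgroup.centralizer {g}) φ

lemma fcc_map (φ : G ≃* G) {g : G} (hg : g ∈ fcc G) : φ g ∈ fcc G := by
  rw [mem_fcc] at *
  constructor
  rw [index_centralizer_map]
  exact hg.index_ne_zero

instance fcc_normal : (fcc G).Normal := ⟨fun _ hg x => fcc_map (MulAut.conj x) hg⟩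

lemma range_conj_subset (x : G) : Set.range (fun g : G => g * x * g⁻¹) ⊆
    Set.range (fun q : G ⧸ Subgroup.centralizer {x} => q.out * x * q.out⁻¹) := by
  rintro _ ⟨g, rfl⟩
  refine ⟨(g : G ⧸ Subgroup.centralizer {x}), ?_⟩
  obtain ⟨h, hh⟩ := QuotientGroup.mk_out_eq_mul (Subgroup.centralizer {x}) g
  have h2 := mem_centralizer_one.1 h.2
  simp only [hh, mul_inv_rev]
  calc g * h * x * (h⁻¹ * g⁻¹) = g * (h * x) * h⁻¹ * g⁻¹ := by group
    _ = g * x * g⁻¹ := by rw [h2]; simp [mul_assoc]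

lemma finite_conj {x : G} (hx : x ∈ fcc G) : (Set.range (fun g : G => g * x * g⁻¹)).Finite := by
  have := mem_fcc.1 hx
  exact (Set.finite_range _).subset (range_conj_subset x)

lemma finite_of_finite_subgroup (H : Subgroup G) [Finite H] [H.FiniteIndex] : Finite G := by
  have h := H.card_mul_index
  apply Nat.finite_of_card_ne_zero
  rw [← h]
  exact mul_ne_zero Nat.card_pos.ne' Subgroup.FiniteIndex.index_ne_zero

lemma dietz {m : ℕ} (hm : 1 ≤ m) (hG : ∀ g : G, g ^ m = 1) (T : Set G) (hT : T.Finite)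
    (hTf : T ⊆ fcc G) : Finite (Subgroup.closure T) := by
  set W := Subgroup.closure T with hW
  have : Group.FG W := by
    rw [Group.fg_iff_subgroup_fg, Subgroup.fg_iff]
    exact ⟨T, rfl, hT⟩
  have key : (⨅ t : T, Subgroup.centralizer {(t : G)}).FiniteIndex := by
    have := hT.to_subtype
    apply Subgroup.finiteIndex_iInf
    intro t
    exact mem_fcc.1 (hTf t.2)
  have h2 : (Subgroup.center W).FiniteIndex := by
    refine Subgroup.finiteIndex_of_le
      (H := (⨅ t : T, Subgroup.centralizer {(t : G)}).subgroupOf W) ?_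
    intro w hw
    rw [Subgroup.mem_subgroupOf, Subgroup.mem_iInf] at hw
    rw [Subgroup.mem_center_iff]
    intro v
    have : W ≤ Subgroup.centralizer {(w : G)} := by
      refine (Subgroup.closure_le _).2 ?_
      intro t ht
      have := mem_centralizer_one.1 (hw ⟨t, ht⟩)
      exact mem_centralizer_one.2 this.symm
    exact Subtype.ext (mem_centralizer_one.1 (this v.2))
  have : Finite (Subgroup.center W) := by
    have hfg := Subgroup.fg_of_index_ne_zero (Subgroup.center W)
    let _ : CommGroup (Subgroup.center W) :=
      { (inferInstance : Group (Subgroup.center W)) with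
        mul_comm := fun a b => Subtype.ext ((Subgroup.mem_center_iff.1 b.2) a) }
    refine @CommGroup.finite_of_fg_isMulTorsion _ _ hfg ?_
    intro g
    rw [isOfFinOrder_iff_pow_eq_one]
    exact ⟨m, hm, by ext; simp [hG]⟩
  exact finite_of_finite_subgroup (Subgroup.center W)

lemma finite_of_fcc {m : ℕ} (hm : 1 ≤ m) (hG : ∀ g : G, g ^ m = 1) [Group.FG G]
    [(fcc G).FiniteIndex] : Finite G := by
  have := Subgroup.fg_of_index_ne_zero (fcc G)
  rw [Group.fg_iff_subgroup_fg, Subgroup.fg_iff] at this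
  obtain ⟨T, hT, hTf⟩ := this
  have : Finite (fcc G) := by
    have h := dietz hm hG T hTf (by rw [← hT]; exact Subgroup.subset_closure)
    rwa [hT] at h
  exact finite_of_finite_subgroup (fcc G)

variable (α : G ≃* G)

lemma finite_fixmod (hA : {g : G | α g = g}.Finite) {W : Set G} (hW : W.Finite) :
    {g : G | g⁻¹ * α g ∈ W}.Finite := by
  refine Set.Finite.preimage' (f := fun g : G => g⁻¹ * α g) hW ?_
  intro b _
  rcases (((fun g : G => g⁻¹ * α g) ⁻¹' {b})).eq_empty_or_nonempty with h | ⟨x, hx⟩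
  · rw [h]; exact Set.finite_empty
  · refine (hA.image (fun a => a * x)).subset ?_
    intro y hy
    simp only [Set.mem_preimage, Set.mem_singleton_iff] at hx hy
    refine ⟨y * x⁻¹, ?_, by simp⟩
    have h1 : α y = y * b := by rw [← hy]; group
    have h2 : α x = x * b := by rw [← hx]; group
    simp [h1, h2]

lemma stepW (hα : ∀ g, α (α g) = g) (hA : {g : G | α g = g}.Finite)
    {m : ℕ} (hm : 1 ≤ m) (hG : ∀ g : G, g ^ m = 1) (q i : ℕ)
    (h : ∃ W : Subgroup G, W.Normal ∧ Finite W ∧ (∀ w ∈ W, α w ∈ W) ∧ ∃ E : Set G, SmallSet E ∧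
      ∀ g ∉ E, (g⁻¹ * α g) ^ (q * 2 ^ (i + 1)) ∈ W) :
    ∃ W : Subgroup G, W.Normal ∧ Finite W ∧ (∀ w ∈ W, α w ∈ W) ∧ ∃ E : Set G, SmallSet E ∧
      ∀ g ∉ E, (g⁻¹ * α g) ^ (q * 2 ^ i) ∈ W := by
  obtain ⟨W, hWn, hWf, hWα, E, hE, hgE⟩ := h
  set A : Set G := {g : G | g⁻¹ * α g ∈ (W : Set G)} with hAdef
  have hAf : A.Finite := finite_fixmod α hA (W := (W : Set G)) hWf
  have hconj : (Group.conjugatesOfSet (A ∩ fcc G)).Finite := by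
    unfold Group.conjugatesOfSet
    refine (hAf.inter_of_left _).biUnion ?_
    intro a ha
    refine (finite_conj ha.2).subset ?_
    intro b hb
    obtain ⟨c, hc⟩ := isConj_iff.1 hb
    exact ⟨c, hc⟩
  refine ⟨Subgroup.normalClosure (A ∩ fcc G), inferInstance, ?_, ?_, ?_⟩
  · apply dietz hm hG _ hconj
    intro b hb
    obtain ⟨a, ha, hab⟩ := Group.mem_conjugatesOfSet_iff.1 hb
    obtain ⟨c, rfl⟩ := isConj_iff.1 hab
    exact fcc_normal.conj_mem _ ha.2 _
  · have : Subgroup.normalClosure (A ∩ fcc G) ≤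
        (Subgroup.normalClosure (A ∩ fcc G)).comap (α : G →* G) := by
      apply Subgroup.normalClosure_le_normal
      intro a ha
      apply Subgroup.subset_normalClosure
      refine ⟨?_, fcc_map α ha.2⟩
      have := hWα _ ha.1
      simpa [hAdef, hα] using this
    exact this
  · refine ⟨E ∪ ⋃ y ∈ A \ fcc G, ⋃ v ∈ A, {g | g * y * g⁻¹ = v}, ?_, ?_⟩
    · refine hE.union (SmallSet.biUnion (hAf.sdiff) fun y hy => SmallSet.biUnion hAf fun v _ => ?_)
      refine SmallSet.coset (Subgroup.centralizer {y}) hy.2 ?_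
      intro a ha b hb
      simp only [Set.mem_ofPred_eq] at ha hb
      rw [mem_centralizer_one]
      have : a * y * a⁻¹ = b * y * b⁻¹ := by rw [ha, hb]
      calc a⁻¹ * b * y = a⁻¹ * (b * y * b⁻¹) * b := by group
        _ = y * (a⁻¹ * b) := by rw [← this]; group
    · intro g hg
      rw [Set.mem_union, not_or] at hg
      obtain ⟨hg1, hg2⟩ := hg
      have hx := hgE g hg1
      set x := g⁻¹ * α g with hxdef
      have hαx : α x = x⁻¹ := by simp [hxdef, hα]
      set y := x ^ (q * 2 ^ i) with hy
      have hαy : α y = y⁻¹ := by rw [hy, map_pow, hαx, inv_pow]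
      have hyW : y⁻¹ * α y ∈ W := by
        rw [hαy, ← mul_inv_rev]
        apply W.inv_mem
        convert hx using 1
        rw [hy, ← pow_add]
        congr 1; ring
      have hyA : y ∈ A := hyW
      by_cases hyf : y ∈ fcc G
      · exact Subgroup.subset_normalClosure ⟨hyA, hyf⟩
      · exfalso
        apply hg2
        simp only [Set.mem_iUnion]
        refine ⟨y, ⟨hyA, hyf⟩, g * y * g⁻¹, ?_, rfl⟩
        show (g * y * g⁻¹)⁻¹ * α (g * y * g⁻¹) ∈ W
        have h1 : α g = g * x := by rw [hxdef]; group
        have hc : x * y⁻¹ * x⁻¹ = y⁻¹ := by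
          have : Commute x y⁻¹ := ((Commute.refl x).pow_right _).inv_right
          rw [this.eq]; group
        have : (g * y * g⁻¹)⁻¹ * α (g * y * g⁻¹) = g * (y⁻¹ * α y) * g⁻¹ := by
          simp only [map_mul, map_inv, h1, hαy]
          calc _ = g * y⁻¹ * (x * y⁻¹ * x⁻¹) * g⁻¹ := by group
            _ = _ := by rw [hc]; group
        rw [this]
        exact hWn.conj_mem _ hyW _

lemma fcc_finiteIndex (hα : ∀ g, α (α g) = g) (hA : {g : G | α g = g}.Finite)
    {m : ℕ} (hm : 1 ≤ m) (hG : ∀ g : G, g ^ m = 1) : (fcc G).FiniteIndex := by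
  obtain ⟨e, q, hq, hmq⟩ := Nat.exists_eq_two_pow_mul_odd (n := m) (by omega)
  have main : ∃ W : Subgroup G, W.Normal ∧ Finite W ∧ (∀ w ∈ W, α w ∈ W) ∧
      ∃ E : Set G, SmallSet E ∧ ∀ g ∉ E, (g⁻¹ * α g) ^ (q * 2 ^ 0) ∈ W := by
    refine Nat.decreasingInduction (n := e) (m := 0) (motive := fun i _ =>
      ∃ W : Subgroup G, W.Normal ∧ Finite W ∧ (∀ w ∈ W, α w ∈ W) ∧
      ∃ E : Set G, SmallSet E ∧ ∀ g ∉ E, (g⁻¹ * α g) ^ (q * 2 ^ i) ∈ W) ?_ ?_ (Nat.zero_le e)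
    · intro i _ h
      exact stepW α hα hA hm hG q i h
    · refine ⟨⊥, inferInstance, inferInstance, by simp, ∅, SmallSet.empty, ?_⟩
      intro g _
      rw [mul_comm, ← hmq, hG]
      exact Subgroup.one_mem _
  obtain ⟨W, hWn, hWf, hWα, E, hE, hgE⟩ := main
  set B : Set G := {g : G | g⁻¹ * α g ∈ (W : Set G)} with hBdef
  have hBf : B.Finite := finite_fixmod α hA (W := (W : Set G)) hWf
  set S : Set G := {s | α s = s⁻¹} with hS
  have hcov : ∀ g ∉ E, ∃ b ∈ B, ∃ s ∈ S, g = b * s := by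
    intro g hg
    have hx := hgE g hg
    set x := g⁻¹ * α g with hxdef
    have hαx : α x = x⁻¹ := by simp [hxdef, hα]
    have h1 : α g = g * x := by rw [hxdef]; group
    obtain ⟨r, hr⟩ := hq
    refine ⟨g * x ^ (r + 1), ?_, (x ^ (r + 1))⁻¹, ?_, by group⟩
    · show (g * x ^ (r + 1))⁻¹ * α (g * x ^ (r + 1)) ∈ W
      have : (g * x ^ (r + 1))⁻¹ * α (g * x ^ (r + 1)) = (x ^ (q * 2 ^ 0))⁻¹ := by
        simp only [map_mul, map_pow, h1, hαx]
        rw [hr]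
        simp only [← zpow_natCast, ← zpow_neg, mul_inv_rev, inv_zpow']
        have : x ^ (-((r + 1 : ℕ) : ℤ)) * g⁻¹ * (g * x * x ^ (-((r + 1 : ℕ) : ℤ)))
          = x ^ (-((r + 1 : ℕ) : ℤ)) * x ^ (1 : ℤ) * x ^ (-((r + 1 : ℕ) : ℤ)) := by group
        rw [this, ← zpow_add, ← zpow_add]
        congr 1
        push_cast; ring
      rw [this]
      exact W.inv_mem hx
    · show α _ = _
      rw [map_inv, map_pow, hαx, inv_pow]
  have hSf : ∀ x ∈ S, ∃ b ∈ B, x * α b ∈ fcc G := by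
    intro x hx
    by_contra! hno
    have hSs : SmallSet S := by
      refine ((hE.smul x⁻¹).union (SmallSet.biUnion hBf (f := fun b =>
        {y | y * (x * α b) * y⁻¹ = b⁻¹ * x}) fun b hb => ?_)).mono ?_
      · refine SmallSet.coset (Subgroup.centralizer {x * α b}) (hno b hb) ?_
        intro a ha c hc
        simp only [Set.mem_ofPred_eq] at ha hc
        rw [mem_centralizer_one]
        have : a * (x * α b) * a⁻¹ = c * (x * α b) * c⁻¹ := by rw [ha, hc]
        calc a⁻¹ * c * (x * α b) = a⁻¹ * (c * (x * α b) * c⁻¹) * c := by group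
          _ = (x * α b) * (a⁻¹ * c) := by rw [← this]; group
      · intro y hy
        by_cases hxy : x * y ∈ E
        · left
          rw [Set.mem_smul_set_iff_inv_smul_mem]
          simpa using hxy
        · right
          obtain ⟨b, hb, s, hs, hbs⟩ := hcov _ hxy
          simp only [Set.mem_iUnion]
          refine ⟨b, hb, ?_⟩
          simp only [hS, Set.mem_ofPred_eq] at hx hy hs ⊢
          have e1 : α (x * y) = α b * α s := by rw [hbs, map_mul]
          rw [map_mul, hx, hy, hs] at e1
          have e2 : s = b⁻¹ * (x * y) := by rw [hbs]; group
          have e3 : α b = x⁻¹ * y⁻¹ * s := by rw [e1]; group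
          rw [e3, e2]; group
    refine SmallSet.ne_univ (G := G) ((hE.union (SmallSet.biUnion hBf
      (f := fun b => b • S) fun b _ => hSs.smul b)).mono ?_)
    intro g _
    by_cases hg : g ∈ E
    · exact Or.inl hg
    · right
      obtain ⟨b, hb, s, hs, rfl⟩ := hcov g hg
      simp only [Set.mem_iUnion]
      exact ⟨b, hb, s, hs, rfl⟩
  by_contra hnf
  refine SmallSet.ne_univ (G := G) ((hE.union (SmallSet.biUnion hBf
    (f := fun b => ⋃ c ∈ B, {g | (b * (α c)⁻¹)⁻¹ * g ∈ fcc G})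
    fun b _ => SmallSet.biUnion hBf fun c _ => SmallSet.coset (fcc G) hnf ?_)).mono ?_)
  · intro x hx y hy
    simp only [Set.mem_ofPred_eq] at hx hy
    have := (fcc G).mul_mem ((fcc G).inv_mem hx) hy
    convert this using 1
    group
  · intro g _
    by_cases hg : g ∈ E
    · exact Or.inl hg
    · right
      obtain ⟨b, hb, s, hs, rfl⟩ := hcov g hg
      obtain ⟨c, hc, hsc⟩ := hSf s hs
      simp only [Set.mem_iUnion]
      refine ⟨b, hb, c, hc, ?_⟩
      have := fcc_normal.conj_mem _ hsc (α c)
      simp only [Set.mem_ofPred_eq]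
      convert this using 1
      group

end PartOne

section PartTwo
variable {G : Type*} [Group G]

lemma card_le_fix (α : G ≃* G) [Finite G] [DecidableEq G] {n : ℕ}
    (hn : {g : G | α g = g}.ncard ≤ n) (s : Finset G) :
    s.card ≤ n * (s.image (fun g => g⁻¹ * α g)).card := by
  apply Finset.card_le_mul_card_image
  intro b hb
  obtain ⟨x, hx, hxb⟩ := Finset.mem_image.1 hb
  refine le_trans ?_ hn
  rw [← Set.ncard_coe_finset]
  refine Set.ncard_le_ncard_of_injOn (fun y => y * x⁻¹) ?_ ?_ (Set.toFinite _)
  · intro y hy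
    simp only [Finset.coe_filter, Set.mem_ofPred_eq] at hy
    have h1 : α y = y * b := by rw [← hy.2]; group
    have h2 : α x = x * b := by rw [← hxb]; group
    simp [h1, h2]
  · intro y _ z _ h
    simpa using h

lemma pair_count [Fintype G] [DecidableEq G] {n : ℕ} (hn : 1 ≤ n) (S P : Finset G)
    (hS : Fintype.card G ≤ n * S.card)
    (hP : ∀ x ∈ P, ∀ y ∈ P, x ≠ y →
      (Finset.univ.filter (fun h : G => x⁻¹ * h ∈ S ∧ y⁻¹ * h ∈ S)).card * (2 * n ^ 2)
        ≤ Fintype.card G) :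
    P.card ≤ 2 * n := by
  set g := Fintype.card G with hg
  have hgpos : 0 < g := Fintype.card_pos
  have hSpos : 0 < S.card := by
    rcases Nat.eq_zero_or_pos S.card with h | h
    · rw [h] at hS; omega
    · exact h
  rcases Nat.eq_zero_or_pos P.card with h0 | hp
  · omega
  let r : G → ℕ := fun h => ∑ x ∈ P, if x⁻¹ * h ∈ S then 1 else 0
  have hsum1 : ∀ x : G, ∑ h : G, (if x⁻¹ * h ∈ S then 1 else 0) = S.card := by
    intro x
    rw [← Finset.card_filter]
    apply Finset.card_bij (fun h _ => x⁻¹ * h)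
    · intro a ha; simpa using ha
    · intro a _ b _ h; simpa using h
    · intro b hb; exact ⟨x * b, by simpa using hb, by simp⟩
  have h1 : ∑ h : G, r h = P.card * S.card := by
    simp only [r]
    rw [Finset.sum_comm, Finset.sum_congr rfl (fun x _ => hsum1 x)]
    simp
  have h2 : ∑ h : G, r h ^ 2 = ∑ x ∈ P, ∑ y ∈ P,
      (Finset.univ.filter (fun h : G => x⁻¹ * h ∈ S ∧ y⁻¹ * h ∈ S)).card := by
    simp only [r, sq, Finset.sum_mul_sum]
    rw [Finset.sum_comm]
    refine Finset.sum_congr rfl fun x _ => ?_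
    rw [Finset.sum_comm]
    refine Finset.sum_congr rfl fun y _ => ?_
    rw [Finset.card_filter]
    refine Finset.sum_congr rfl fun h _ => ?_
    by_cases ha : x⁻¹ * h ∈ S <;> by_cases hb : y⁻¹ * h ∈ S <;> simp [ha, hb]
  have h3 : (∑ h : G, r h ^ 2) * (2 * n ^ 2) ≤
      P.card * S.card * (2 * n ^ 2) + P.card ^ 2 * g := by
    rw [h2, Finset.sum_mul]
    have : ∀ x ∈ P, (∑ y ∈ P,
      (Finset.univ.filter (fun h : G => x⁻¹ * h ∈ S ∧ y⁻¹ * h ∈ S)).card) * (2 * n ^ 2) ≤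
        S.card * (2 * n ^ 2) + P.card * g := by
      intro x hx
      rw [← Finset.add_sum_erase P _ hx, add_mul]
      apply add_le_add
      · have := hsum1 x
        rw [← Finset.card_filter] at this
        simp [this]
      · rw [Finset.sum_mul]
        refine (Finset.sum_le_card_nsmul _ _ g ?_).trans ?_
        · intro y hy
          rw [Finset.mem_erase] at hy
          exact hP x hx y hy.2 (Ne.symm hy.1)
        · rw [smul_eq_mul]
          exact Nat.mul_le_mul_right _ (Finset.card_le_card (Finset.erase_subset _ _))
    refine (Finset.sum_le_card_nsmul _ _ _ this).trans (le_of_eq ?_)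
    rw [smul_eq_mul]; ring
  have h4 : (∑ h : G, r h) ^ 2 ≤ g * ∑ h : G, r h ^ 2 := by
    have := sq_sum_le_card_mul_sum_sq (s := (Finset.univ : Finset G)) (f := r)
    simpa [hg] using this
  rw [h1] at h4
  set p := P.card
  set s := S.card
  set Q := ∑ h : G, r h ^ 2
  have h5 : (p * s) ^ 2 * (2 * n ^ 2) ≤ g * (p * s * (2 * n ^ 2) + p ^ 2 * g) := by
    calc (p * s) ^ 2 * (2 * n ^ 2) ≤ (g * Q) * (2 * n ^ 2) := Nat.mul_le_mul_right _ h4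
      _ = g * (Q * (2 * n ^ 2)) := by ring
      _ ≤ _ := Nat.mul_le_mul_left _ h3
  have h6 : p ^ 2 * (g * g) ≤ p ^ 2 * ((n * s) * (n * s)) :=
    Nat.mul_le_mul_left _ (Nat.mul_le_mul hS hS)
  have h7 : (p * s * n ^ 2) * (p * s) ≤ (p * s * n ^ 2) * (2 * g) := by nlinarith
  have h8 : p * s ≤ 2 * g := Nat.le_of_mul_le_mul_left h7 (by positivity)
  have h9 : s * p ≤ s * (2 * n) := by nlinarith
  exact Nat.le_of_mul_le_mul_left h9 hSpos

lemma inter_count [Fintype G] [DecidableEq G] (α : G ≃* G) (S : Finset G)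
    (hS : ∀ s ∈ S, α s = s⁻¹) (x y : G) :
    (Finset.univ.filter (fun h : G => x⁻¹ * h ∈ S ∧ y⁻¹ * h ∈ S)).card ≤
      Nat.card (Subgroup.centralizer {x⁻¹ * y}) := by
  set F := Finset.univ.filter (fun h : G => x⁻¹ * h ∈ S ∧ y⁻¹ * h ∈ S) with hF
  have key : ∀ h ∈ F, (y⁻¹ * h)⁻¹ * (x⁻¹ * y) * (y⁻¹ * h) = α (y⁻¹ * x) := by
    intro h hh
    simp only [hF, Finset.mem_filter, Finset.mem_univ, true_and] at hh
    have e1 := hS _ hh.1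
    have e2 := hS _ hh.2
    have : y⁻¹ * x = (y⁻¹ * h) * (x⁻¹ * h)⁻¹ := by group
    rw [this, map_mul, map_inv, e1, e2]
    group
  rcases F.eq_empty_or_nonempty with h0 | ⟨h0, hh0⟩
  · simp [h0]
  · rw [← Set.ncard_coe_finset, ← SetLike.coe_sort_coe, Nat.card_coe_set_eq]
    refine Set.ncard_le_ncard_of_injOn (fun h => (y⁻¹ * h) * (y⁻¹ * h0)⁻¹) ?_ ?_ (Set.toFinite _)
    · intro h hh
      have a1 := key h hh
      have a2 := key h0 hh0
      rw [← a2] at a1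
      rw [SetLike.mem_coe, mem_centralizer_one]
      set k := x⁻¹ * y
      set b := y⁻¹ * h
      set b0 := y⁻¹ * h0
      calc b * b0⁻¹ * k = b * (b0⁻¹ * k * b0) * b0⁻¹ := by group
        _ = k * (b * b0⁻¹) := by rw [← a1]; group
    · intro a _ b _ h
      simpa using h

lemma chain_lemma (Y : ℕ → Set G) (hmono : ∀ k l, k ≤ l → Y k ⊆ Y l)
    (h1 : ∀ k, 1 ∈ Y k) (hinv : ∀ k, ∀ g ∈ Y k, g⁻¹ ∈ Y k)
    (hmul : ∀ k l, ∀ g ∈ Y k, ∀ h ∈ Y l, g * h ∈ Y (k + l)) :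
    ∀ M k, (∀ P : Finset G, (∀ x ∈ P, ∀ y ∈ P, x ≠ y → x⁻¹ * y ∉ Y k) → P.card ≤ M) →
      ∃ l ≤ 3 ^ M * k, ∃ H : Subgroup G, (H : Set G) = Y l ∧ H.index ≤ M := by
  classical
  intro M
  induction M with
  | zero =>
    intro k hk
    have := hk {1} (by simp)
    simp at this
  | succ M ih =>
    intro k hk
    by_cases h3 : ∀ P : Finset G, (∀ x ∈ P, ∀ y ∈ P, x ≠ y → x⁻¹ * y ∉ Y (3 * k)) → P.card ≤ M
    · obtain ⟨l, hl, H, hH, hi⟩ := ih (3 * k) h3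
      exact ⟨l, hl.trans (le_of_eq (by ring)), H, hH, hi.trans (Nat.le_succ M)⟩
    · push Not at h3
      obtain ⟨P, hP, hPc⟩ := h3
      have hPk : ∀ x ∈ P, ∀ y ∈ P, x ≠ y → x⁻¹ * y ∉ Y k :=
        fun x hx y hy hxy h => hP x hx y hy hxy (hmono k (3 * k) (by omega) h)
      have hcov : ∀ g : G, ∃ p ∈ P, p⁻¹ * g ∈ Y k := by
        intro g
        by_contra! hno
        have hgP : g ∉ P := fun h => hno g h (by simpa using h1 k)
        have := hk (insert g P) (by
          intro x hx y hy hxy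
          rw [Finset.mem_insert] at hx hy
          rcases hx with rfl | hx <;> rcases hy with rfl | hy
          · exact absurd rfl hxy
          · intro h
            have := hinv _ _ h
            apply hno y hy
            simpa using this
          · exact hno x hx
          · exact hPk x hx y hy hxy)
        rw [Finset.card_insert_of_notMem hgP] at this
        omega
      have hmulk : ∀ a ∈ Y k, ∀ b ∈ Y k, a * b ∈ Y k := by
        intro a ha b hb
        have : P.Nonempty := by rw [← Finset.card_pos]; omega
        obtain ⟨p0, hp0⟩ := this
        obtain ⟨p, hp, hw⟩ := hcov (p0 * (a * b))
        by_cases hpp : p0 = p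
        · subst hpp; simpa using hw
        · exfalso
          apply hP p0 hp0 p hp hpp
          have := hmul _ _ _ (hmul _ _ a ha b hb) _ (hinv _ _ hw)
          have e : k + k + k = 3 * k := by ring
          rw [e] at this
          convert this using 1
          group
      refine ⟨k, Nat.le_mul_of_pos_left _ (by positivity),
        ⟨⟨⟨Y k, fun {a b} ha hb => hmulk a ha b hb⟩, h1 k⟩, fun {a} ha => hinv k a ha⟩, rfl, ?_⟩
      have hPc' : P.card ≤ M + 1 := hk P hPk
      refine le_trans (Subgroup.index_le_of_leftCoset_cover_const (s := P) (g := id) ?_) hPc'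
      rw [Set.eq_univ_iff_forall]
      intro g
      obtain ⟨p, hp, hw⟩ := hcov g
      simp only [Set.mem_iUnion]
      refine ⟨p, hp, ?_⟩
      rw [Set.mem_smul_set_iff_inv_smul_mem]
      exact hw

lemma ccb_mono {a b : ℕ} (ha : 1 ≤ a) (hab : a ≤ b) :
    Subgroup.cardCommutatorBound a ≤ Subgroup.cardCommutatorBound b := by
  unfold Subgroup.cardCommutatorBound
  have hb : 1 ≤ b := ha.trans hab
  have e1 : a ^ (2 * a) ≤ b ^ (2 * b) := (Nat.pow_le_pow_left hab _).trans (Nat.pow_le_pow_right hb (by omega))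
  have e2 : a ^ (2 * a + 1) ≤ b ^ (2 * b + 1) := (Nat.pow_le_pow_left hab _).trans (Nat.pow_le_pow_right hb (by omega))
  exact (Nat.pow_le_pow_left e1 _).trans
    (Nat.pow_le_pow_right (Nat.one_le_pow _ _ hb) (by omega))

end PartTwo

section PartThree
variable {G : Type*} [Group G]

/-- Bound in the BFC theorem. -/
def bfcB (L : ℕ) : ℕ := Subgroup.cardCommutatorBound ((L * L) * (L ^ L * L))

lemma bfc [Finite G] {L : ℕ} (hL : ∀ g : G, (Subgroup.centralizer {g}).index ≤ L) :
    Nat.card (commutator G) ≤ bfcB L := by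
  classical
  have := Fintype.ofFinite G
  let cl : G → Finset G := fun x => Finset.univ.image (fun g => g * x * g⁻¹)
  have hcl : ∀ x, (cl x).card ≤ L := by
    intro x
    have h := range_conj_subset x
    refine le_trans ?_ (hL x)
    have h2 : ((cl x : Finset G) : Set G) ⊆
        Set.range (fun q : G ⧸ Subgroup.centralizer {x} => q.out * x * q.out⁻¹) := by
      simpa [cl] using h
    rw [← Set.ncard_coe_finset]
    refine (Set.ncard_le_ncard h2 (Set.toFinite _)).trans ?_
    rw [← Set.image_univ]
    refine (Set.ncard_image_le (Set.toFinite _)).trans ?_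
    rw [Set.ncard_univ]
    exact le_rfl
  have hmem : ∀ {x y}, y ∈ cl x ↔ ∃ g, g * x * g⁻¹ = y := by
    intro x y; simp [cl]
  have hL1 : 1 ≤ L := by
    have h := hL 1
    have := (Subgroup.centralizer {(1 : G)}).index_ne_zero_of_finite
    omega
  obtain ⟨a, ha⟩ := Finite.exists_max (fun x => (cl x).card)
  have hex : ∀ u : cl a, ∃ b, b * a * b⁻¹ = u := fun u => hmem.1 u.2
  choose b hb using hex
  let C : Subgroup G := ⨅ u : cl a, Subgroup.centralizer {b u}
  have hC : C.index ≤ L ^ L := by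
    refine (Subgroup.index_iInf_le _).trans ?_
    refine (Finset.prod_le_pow_card _ _ L fun u _ => hL _).trans ?_
    apply Nat.pow_le_pow_right hL1
    simpa using hcl a
  have hcC : ∀ c ∈ C, cl (c * a) = (cl a).image (fun u => c * u) := by
    intro c hc
    symm
    apply Finset.eq_of_subset_of_card_le
    · intro v hv
      obtain ⟨u, hu, rfl⟩ := Finset.mem_image.1 hv
      rw [hmem]
      refine ⟨b ⟨u, hu⟩, ?_⟩
      have h1 := (Subgroup.mem_iInf.1 hc) ⟨u, hu⟩
      rw [mem_centralizer_one] at h1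
      have h2 := hb ⟨u, hu⟩
      simp only at h2
      rw [← mul_assoc, ← h1, mul_assoc, mul_assoc, ← mul_assoc _ a, h2]
    · rw [Finset.card_image_of_injective _ (mul_right_injective c)]
      exact ha _
  let U : Finset G := (cl a ×ˢ cl a).image (fun p => p.1 * p.2⁻¹)
  have hU : U.card ≤ L * L := by
    refine Finset.card_image_le.trans ?_
    rw [Finset.card_product]
    exact Nat.mul_le_mul (hcl a) (hcl a)
  have hclconj : ∀ u ∈ cl a, ∀ g, g * u * g⁻¹ ∈ cl a := by
    intro u hu g
    obtain ⟨h, rfl⟩ := hmem.1 hu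
    exact hmem.2 ⟨g * h, by group⟩
  have hUconj : ∀ u ∈ U, ∀ g, g * u * g⁻¹ ∈ U := by
    intro u hu g
    obtain ⟨⟨p, q⟩, hp, rfl⟩ := Finset.mem_image.1 hu
    rw [Finset.mem_product] at hp
    refine Finset.mem_image.2 ⟨(g * p * g⁻¹, g * q * g⁻¹), ?_, by group⟩
    exact Finset.mem_product.2 ⟨hclconj _ hp.1 g, hclconj _ hp.2 g⟩
  have hCU : ∀ c ∈ C, ∀ h, c * h * c⁻¹ * h⁻¹ ∈ U := by
    intro c hc h
    have hc' := C.inv_mem hc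
    have h1 : h * (c⁻¹ * a) * h⁻¹ ∈ cl (c⁻¹ * a) := hmem.2 ⟨h, rfl⟩
    rw [hcC _ hc'] at h1
    obtain ⟨u, hu, h2⟩ := Finset.mem_image.1 h1
    refine Finset.mem_image.2 ⟨(u, h * a * h⁻¹), Finset.mem_product.2 ⟨hu, hmem.2 ⟨h, rfl⟩⟩, ?_⟩
    have h3 : u = c * (h * (c⁻¹ * a) * h⁻¹) := by rw [← h2]; group
    simp only
    rw [h3]; group
  let V : Finset G := (Finset.univ : Finset (G ⧸ C)).biUnion
    (fun q => (cl (q.out⁻¹)).image (fun u => q.out * u))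
  have hV : V.card ≤ L ^ L * L := by
    refine (Finset.card_biUnion_le_card_mul _ _ L fun q _ =>
      Finset.card_image_le.trans (hcl _)).trans ?_
    apply Nat.mul_le_mul_right
    rw [Finset.card_univ, ← Nat.card_eq_fintype_card]
    exact hC
  have hsub : commutatorSet G ⊆ ((U ×ˢ V).image (fun p => p.1 * p.2) : Finset G) := by
    rintro _ ⟨g, h, rfl⟩
    obtain ⟨c, hc⟩ := QuotientGroup.mk_out_eq_mul C g
    set r := Quotient.out (g : G ⧸ C) with hr
    have hg : g = r * (c : G)⁻¹ := by rw [hc]; group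
    rw [Finset.mem_coe, Finset.mem_image]
    refine ⟨(r * ((c : G)⁻¹ * h * (c : G)⁻¹⁻¹ * h⁻¹) * r⁻¹, r * (h * r⁻¹ * h⁻¹)), ?_, ?_⟩
    · refine Finset.mem_product.2 ⟨hUconj _ (hCU _ (C.inv_mem c.2) h) r, ?_⟩
      refine Finset.mem_biUnion.2 ⟨(g : G ⧸ C), Finset.mem_univ _, ?_⟩
      exact Finset.mem_image.2 ⟨h * r⁻¹ * h⁻¹, hmem.2 ⟨h, rfl⟩, rfl⟩
    · simp only
      rw [commutatorElement_def, hg]; group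
  have hcard : Nat.card (commutatorSet G) ≤ (L * L) * (L ^ L * L) := by
    rw [Nat.card_coe_set_eq]
    refine (Set.ncard_le_ncard hsub (Set.toFinite _)).trans ?_
    rw [Set.ncard_coe_finset]
    refine Finset.card_image_le.trans ?_
    rw [Finset.card_product]
    exact Nat.mul_le_mul hU hV
  refine (Subgroup.card_commutator_le_of_finite_commutatorSet G).trans ?_
  apply ccb_mono _ hcard
  have : Nonempty (commutatorSet G) := ⟨⟨1, one_mem_commutatorSet G⟩⟩
  exact Nat.card_pos

lemma card_comm_eq (E : Subgroup G) : Nat.card ↥⁅E, E⁆ = Nat.card (commutator E) := by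
  rw [← Subgroup.map_subtype_commutator]
  exact Subgroup.card_map_of_injective E.subtype_injective

/-- `[G, α]`. -/
def gal (α : G ≃* G) : Subgroup G := Subgroup.closure {x : G | ∃ g : G, g⁻¹ * α g = x}

lemma index_gal [Finite G] (α : G ≃* G) {n : ℕ} (hn : {g : G | α g = g}.ncard ≤ n) :
    (gal α).index ≤ n := by
  classical
  have := Fintype.ofFinite G
  have h := card_le_fix α hn Finset.univ
  have h2 : (Finset.univ.image (fun g => g⁻¹ * α g)).card ≤ Nat.card (gal α) := by
    rw [← Set.ncard_coe_finset, ← SetLike.coe_sort_coe, Nat.card_coe_set_eq]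
    refine Set.ncard_le_ncard ?_ (Set.toFinite _)
    intro x hx
    apply Subgroup.subset_closure
    simpa using hx
  have h3 := (gal α).card_mul_index
  rw [Finset.card_univ, ← Nat.card_eq_fintype_card, ← h3] at h
  have h4 : Nat.card (gal α) * (gal α).index ≤ Nat.card (gal α) * n := by
    refine h.trans ?_
    rw [mul_comm]
    exact Nat.mul_le_mul_right _ h2
  exact Nat.le_of_mul_le_mul_left h4 Nat.card_pos

/-- Bound when there is a large abelian invariant subgroup. -/
def abB (M n : ℕ) : ℕ := bfcB ((n * M).factorial)

lemma abelian_case [Finite G] (α : G ≃* G) (hα : ∀ g, α (α g) = g) {n M : ℕ}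
    (hn : {g : G | α g = g}.ncard ≤ n) (F : Subgroup G) (hF : ∀ f ∈ F, α f ∈ F)
    (hFc : ∀ f ∈ F, ∀ g ∈ F, f * g = g * f) (hFi : F.index ≤ M) :
    Nat.card ↥⁅gal α, gal α⁆ ≤ abB M n := by
  let φ : F →* G :=
    { toFun := fun f => (f : G) * α f
      map_one' := by simp
      map_mul' := by
        intro a b
        simp only [Subgroup.coe_mul, map_mul]
        have := hFc b b.2 (α a) (hF _ a.2)
        calc (a : G) * b * (α a * α b) = a * (b * α a) * α b := by group
          _ = _ := by rw [this]; group }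
  have hφ : ∀ f : F, φ f = (f : G) * α f := fun f => rfl
  let B : Subgroup G := φ.ker.map F.subtype
  have hB : ∀ x ∈ B, α x = x⁻¹ := by
    rintro _ ⟨f, hf, rfl⟩
    have : (f : G) * α f = 1 := hf
    exact (inv_eq_of_mul_eq_one_right this).symm
  have hBi : B.index ≤ n * M := by
    rw [Subgroup.index_map_subtype, Subgroup.index_ker]
    refine Nat.mul_le_mul ?_ hFi
    refine le_trans ?_ hn
    rw [← SetLike.coe_sort_coe, Nat.card_coe_set_eq]
    refine Set.ncard_le_ncard ?_ (Set.toFinite _)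
    rintro _ ⟨f, rfl⟩
    simp only [Set.mem_ofPred_eq, hφ, map_mul, hα]
    exact hFc _ (hF _ f.2) _ f.2
  let B0 := B.normalCore
  have hB0 : B0.index ≤ (n * M).factorial := by
    have : B0 = _ := Subgroup.normalCore_eq_ker B
    rw [this, Subgroup.index_ker]
    refine (Subgroup.card_le_card_group _).trans ?_
    rw [Nat.card_perm]
    exact Nat.factorial_le hBi
  have hcen : ∀ b ∈ B0, gal α ≤ Subgroup.centralizer {b} := by
    intro b hb
    refine (Subgroup.closure_le _).2 ?_
    rintro _ ⟨g, rfl⟩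
    rw [SetLike.mem_coe, mem_centralizer_one]
    have h1 := hB _ (B.normalCore_le hb)
    have h2 := hB _ (B.normalCore_le ((Subgroup.normalCore_normal B).conj_mem b hb g))
    simp only [map_mul, map_inv, h1, mul_inv_rev, inv_inv] at h2
    have h3 : α g * b * (α g)⁻¹ = g * b * g⁻¹ := by
      have := congrArg (fun z => z⁻¹) h2
      simpa [mul_assoc] using this
    calc g⁻¹ * α g * b = g⁻¹ * (α g * b * (α g)⁻¹) * α g := by group
      _ = b * (g⁻¹ * α g) := by rw [h3]; group
  rw [card_comm_eq]
  apply bfc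
  intro x
  refine le_trans ?_ hB0
  have h1 : B0.subgroupOf (gal α) ≤ Subgroup.centralizer {x} := by
    intro y hy
    rw [mem_centralizer_one]
    have := mem_centralizer_one.1 (hcen _ (Subgroup.mem_subgroupOf.1 hy) x.2)
    exact Subtype.ext this.symm
  refine (Subgroup.index_antitone h1).trans ?_
  have := Subgroup.relIndex_le_of_le_right (H := B0) (K := gal α) (L := ⊤) le_top
    (by rw [Subgroup.relIndex_top_right]; exact Subgroup.index_ne_zero_of_finite)
  rwa [Subgroup.relIndex_top_right] at this

lemma card_le_mul_map [Finite G] {Q : Type*} [Group Q] (f : G →* Q) (H : Subgroup G) :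
    Nat.card H ≤ Nat.card f.ker * Nat.card (H.map f) := by
  have h1 : H.map f = (f.comp H.subtype).range := by
    rw [MonoidHom.range_comp, H.range_subtype]
  have h2 := (f.comp H.subtype).ker.card_mul_index
  rw [Subgroup.index_ker, ← h1] at h2
  rw [← h2]
  apply Nat.mul_le_mul_right
  refine Nat.card_le_card_of_injective
    (fun x : (f.comp H.subtype).ker => (⟨(x : H), x.2⟩ : f.ker)) ?_
  intro x y h
  have h' : ((x : H) : G) = ((y : H) : G) := by
    have := congrArg (fun z : f.ker => (z : G)) h
    exact this
  exact Subtype.ext (Subtype.ext h')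

/-- The bound for finite groups. -/
def finB (n : ℕ) : ℕ :=
  bfcB ((2 * n ^ 2) ^ (3 ^ (2 * n))) *
    abB (2 * n) (n * bfcB ((2 * n ^ 2) ^ (3 ^ (2 * n))))

lemma exists_F [Finite G] (α : G ≃* G) (hα : ∀ g, α (α g) = g) {n : ℕ} (hn1 : 1 ≤ n)
    (hn : {g : G | α g = g}.ncard ≤ n) :
    ∃ F : Subgroup G, F.index ≤ 2 * n ∧ (∀ φ : G ≃* G, ∀ f ∈ F, φ f ∈ F) ∧
      ∀ f ∈ F, (Subgroup.centralizer {f}).index ≤ (2 * n ^ 2) ^ (3 ^ (2 * n)) := by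
  classical
  have := Fintype.ofFinite G
  set N := 2 * n ^ 2 with hN
  have hN1 : 1 ≤ N := by have := Nat.one_le_pow 2 n hn1; omega
  let Y : ℕ → Set G := fun k => {g | (Subgroup.centralizer {g}).index ≤ N ^ k}
  have hinvc : ∀ g : G, Subgroup.centralizer {g⁻¹} = Subgroup.centralizer {g} := by
    intro g; ext x
    rw [mem_centralizer_one, mem_centralizer_one]
    exact ⟨fun h => by simpa using (Commute.inv_right (show Commute x g⁻¹ from h)).eq,
      fun h => (Commute.inv_right (show Commute x g from h)).eq⟩
  obtain ⟨l, hl, H, hH, hHi⟩ := chain_lemma Y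
    (fun k l hkl g hg => le_trans (show _ ≤ N ^ k from hg) (Nat.pow_le_pow_right hN1 hkl))
    (fun k => by
      have : Subgroup.centralizer {(1 : G)} = ⊤ := by
        ext; simp [mem_centralizer_one]
      show (Subgroup.centralizer {(1 : G)}).index ≤ N ^ k
      rw [this, Subgroup.index_top]
      exact Nat.one_le_pow _ _ hN1)
    (fun k g hg => by
      show (Subgroup.centralizer {g⁻¹}).index ≤ N ^ k
      rw [hinvc]; exact hg)
    (fun k l g hg h hh => by
      show (Subgroup.centralizer {g * h}).index ≤ N ^ (k + l)
      have h1 : Subgroup.centralizer {g} ⊓ Subgroup.centralizer {h} ≤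
          Subgroup.centralizer {g * h} := by
        rintro x ⟨hx, hy⟩
        have e1 := mem_centralizer_one.1 hx
        have e2 := mem_centralizer_one.1 hy
        rw [mem_centralizer_one, ← mul_assoc, e1, mul_assoc, e2, mul_assoc]
      refine (Subgroup.index_antitone h1).trans (Subgroup.index_inf_le.trans ?_)
      rw [pow_add]
      exact Nat.mul_le_mul hg hh)
    (2 * n) 1 (by
      intro P hP
      set S := Finset.univ.image (fun g => g⁻¹ * α g) with hS
      have hSinv : ∀ s ∈ S, α s = s⁻¹ := by
        intro s hs
        obtain ⟨g, _, rfl⟩ := Finset.mem_image.1 hs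
        simp [hα]
      refine pair_count hn1 S P (card_le_fix α hn Finset.univ) ?_
      intro x hx y hy hxy
      have h1 := inter_count α S hSinv x y
      have h2 : ¬ ((Subgroup.centralizer {x⁻¹ * y}).index ≤ N ^ 1) := hP x hx y hy hxy
      rw [pow_one] at h2
      have h3 := (Subgroup.centralizer {x⁻¹ * y}).card_mul_index
      rw [← Nat.card_eq_fintype_card, ← h3]
      exact Nat.mul_le_mul h1 (by omega))
  refine ⟨H, hHi, ?_, ?_⟩
  · intro φ f hf
    have : f ∈ Y l := by rw [← hH]; exact hf
    rw [← SetLike.mem_coe, hH]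
    show (Subgroup.centralizer {φ f}).index ≤ N ^ l
    rw [index_centralizer_map]
    exact this
  · intro f hf
    have : f ∈ Y l := by rw [← hH]; exact hf
    refine le_trans (show _ ≤ N ^ l from this) (Nat.pow_le_pow_right hN1 (by simpa using hl))

lemma finite_case [Finite G] (α : G ≃* G) (hα : ∀ g, α (α g) = g) {n : ℕ}
    (hn : {g : G | α g = g}.ncard ≤ n) : Nat.card ↥⁅gal α, gal α⁆ ≤ finB n := by
  classical
  have := Fintype.ofFinite G
  have hn1 : 1 ≤ n := by
    refine le_trans ?_ hn
    exact (Set.ncard_pos (Set.toFinite _)).2 ⟨1, by simp⟩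
  obtain ⟨F, hFi, hFchar, hFc⟩ := exists_F α hα hn1 hn
  set L := (2 * n ^ 2) ^ (3 ^ (2 * n)) with hLdef
  have hFn : F.Normal := ⟨fun f hf g => hFchar (MulAut.conj g) f hf⟩
  let D : Subgroup G := ⁅F, F⁆
  have hDcard : Nat.card D ≤ bfcB L := by
    rw [card_comm_eq]
    apply bfc
    intro x
    refine le_trans ?_ (hFc x x.2)
    have h1 : (Subgroup.centralizer {(x : G)}).subgroupOf F ≤ Subgroup.centralizer {x} := by
      intro y hy
      rw [mem_centralizer_one]
      exact Subtype.ext (mem_centralizer_one.1 (Subgroup.mem_subgroupOf.1 hy))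
    refine (Subgroup.index_antitone h1).trans ?_
    have := Subgroup.relIndex_le_of_le_right (H := Subgroup.centralizer {(x : G)})
      (K := F) (L := ⊤) le_top
      (by rw [Subgroup.relIndex_top_right]; exact Subgroup.index_ne_zero_of_finite)
    rwa [Subgroup.relIndex_top_right] at this
  have hFmap : F.map (α : G →* G) = F := by
    apply le_antisymm
    · rintro _ ⟨f, hf, rfl⟩
      exact hFchar α f hf
    · intro f hf
      exact ⟨α f, hFchar α f hf, hα f⟩
  have hDmap : D.map (α : G →* G) = D := by
    rw [Subgroup.map_commutator, hFmap]
  let β : G ⧸ D ≃* G ⧸ D := QuotientGroup.congr D D α hDmap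
  have hβ : ∀ g : G, β (g : G ⧸ D) = ((α g : G) : G ⧸ D) := fun g => rfl
  have hβ2 : ∀ q, β (β q) = q := by
    intro q
    obtain ⟨g, rfl⟩ := QuotientGroup.mk_surjective q
    rw [hβ, hβ, hα]
  have hfix : {q : G ⧸ D | β q = q}.ncard ≤ n * bfcB L := by
    let s : Finset G := Finset.univ.filter (fun g => g⁻¹ * α g ∈ D)
    have h1 := card_le_fix α hn s
    have h2 : (s.image (fun g => g⁻¹ * α g)).card ≤ Nat.card D := by
      rw [← Set.ncard_coe_finset, ← SetLike.coe_sort_coe, Nat.card_coe_set_eq]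
      refine Set.ncard_le_ncard ?_ (Set.toFinite _)
      intro x hx
      obtain ⟨g, hg, rfl⟩ := Finset.mem_image.1 (Finset.mem_coe.1 hx)
      exact (Finset.mem_filter.1 hg).2
    have h3 : {q : G ⧸ D | β q = q} ⊆ (fun g : G => (g : G ⧸ D)) '' (s : Set G) := by
      intro q hq
      obtain ⟨g, rfl⟩ := QuotientGroup.mk_surjective q
      refine ⟨g, ?_, rfl⟩
      have hq' : ((α g : G) : G ⧸ D) = (g : G ⧸ D) := hq
      have := QuotientGroup.eq.1 hq'.symm
      simpa [s] using this
    refine (Set.ncard_le_ncard h3 (Set.toFinite _)).trans ?_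
    refine (Set.ncard_image_le (Set.toFinite _)).trans ?_
    rw [Set.ncard_coe_finset]
    exact h1.trans (Nat.mul_le_mul_left _ (h2.trans hDcard))
  have hab := abelian_case β hβ2 hfix (F.map (QuotientGroup.mk' D)) (M := 2 * n)
    (by
      rintro _ ⟨f, hf, rfl⟩
      exact ⟨α f, hFchar α f hf, rfl⟩)
    (by
      rintro _ ⟨f, hf, rfl⟩ _ ⟨g, hg, rfl⟩
      rw [← map_mul, ← map_mul]
      apply QuotientGroup.eq.2
      have := Subgroup.commutator_mem_commutator (F.inv_mem hg) (F.inv_mem hf)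
      convert this using 1
      rw [commutatorElement_def]; group)
    (by
      refine le_trans (Nat.le_of_dvd ?_
        (Subgroup.index_map_dvd F (QuotientGroup.mk'_surjective D))) hFi
      exact Nat.pos_of_ne_zero Subgroup.index_ne_zero_of_finite)
  have hgal : (gal α).map (QuotientGroup.mk' D) = gal β := by
    unfold gal
    rw [MonoidHom.map_closure]
    congr 1
    ext q
    constructor
    · rintro ⟨_, ⟨g, rfl⟩, rfl⟩
      exact ⟨(g : G ⧸ D), rfl⟩
    · rintro ⟨q, rfl⟩
      obtain ⟨g, rfl⟩ := QuotientGroup.mk_surjective q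
      exact ⟨_, ⟨g, rfl⟩, rfl⟩
  have hfin := card_le_mul_map (QuotientGroup.mk' D) ⁅gal α, gal α⁆
  rw [QuotientGroup.ker_mk', Subgroup.map_commutator, hgal] at hfin
  exact hfin.trans (Nat.mul_le_mul hDcard hab)

end PartThree

section PartFour
variable {G : Type*} [Group G]

/-- Restriction of an involutory automorphism to an invariant subgroup. -/
def resAut (α : G ≃* G) (hα : ∀ g, α (α g) = g) (H : Subgroup G) (hH : ∀ h ∈ H, α h ∈ H) :
    H ≃* H where
  toFun h := ⟨α h, hH h h.2⟩
  invFun h := ⟨α h, hH h h.2⟩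
  left_inv h := Subtype.ext (hα h)
  right_inv h := Subtype.ext (hα h)
  map_mul' a b := Subtype.ext (map_mul α (a : G) b)

lemma resAut_fix (α : G ≃* G) (hα : ∀ g, α (α g) = g) (H : Subgroup G) (hH : ∀ h ∈ H, α h ∈ H)
    (hA : {g : G | α g = g}.Finite) {n : ℕ} (hn : {g : G | α g = g}.ncard ≤ n) :
    {h : H | resAut α hα H hH h = h}.Finite ∧ {h : H | resAut α hα H hH h = h}.ncard ≤ n := by
  have hmaps : ∀ h ∈ {h : H | resAut α hα H hH h = h}, (h : G) ∈ {g : G | α g = g} := by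
    intro h hh
    exact congrArg Subtype.val hh
  refine ⟨Set.Finite.of_injOn (f := fun h : H => (h : G)) hmaps
    (Subtype.val_injective.injOn) hA, ?_⟩
  exact (Set.ncard_le_ncard_of_injOn (fun h : H => (h : G)) hmaps
    (Subtype.val_injective.injOn) hA).trans hn

lemma locfin (α : G ≃* G) (hα : ∀ g, α (α g) = g) (hA : {g : G | α g = g}.Finite)
    {m : ℕ} (hm : 1 ≤ m) (hG : ∀ g : G, g ^ m = 1) (T : Set G) (hT : T.Finite) :
    ∃ H : Subgroup G, Finite H ∧ T ⊆ H ∧ ∀ h ∈ H, α h ∈ H := by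
  let H := Subgroup.closure (T ∪ α '' T)
  have hH : ∀ h ∈ H, α h ∈ H := by
    have : H ≤ H.comap (α : G →* G) := by
      refine (Subgroup.closure_le _).2 ?_
      rintro x (hx | ⟨y, hy, rfl⟩)
      · exact Subgroup.subset_closure (Or.inr ⟨x, hx, rfl⟩)
      · show α (α y) ∈ H
        rw [hα]
        exact Subgroup.subset_closure (Or.inl hy)
    exact this
  refine ⟨H, ?_, fun t ht => Subgroup.subset_closure (Or.inl ht), hH⟩
  have hFG : Group.FG H := by
    rw [Group.fg_iff_subgroup_fg, Subgroup.fg_iff]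
    exact ⟨_, rfl, hT.union (hT.image _)⟩
  have hGH : ∀ h : H, h ^ m = 1 := fun h => Subtype.ext (by simp [hG])
  have := fcc_finiteIndex (resAut α hα H hH) (fun h => Subtype.ext (hα h))
    (resAut_fix α hα H hH hA le_rfl).1 hm hGH
  exact finite_of_fcc hm hGH

/-- The part of `[G, α]` coming from `H`. -/
def galS (α : G ≃* G) (H : Subgroup G) : Subgroup G :=
  Subgroup.closure {x : G | ∃ g ∈ H, g⁻¹ * α g = x}

lemma map_gal_res (α : G ≃* G) (hα : ∀ g, α (α g) = g) (H : Subgroup G)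
    (hH : ∀ h ∈ H, α h ∈ H) : (gal (resAut α hα H hH)).map H.subtype = galS α H := by
  unfold gal galS
  rw [MonoidHom.map_closure]
  congr 1
  ext x
  constructor
  · rintro ⟨_, ⟨g, rfl⟩, rfl⟩
    exact ⟨g, g.2, rfl⟩
  · rintro ⟨g, hg, rfl⟩
    exact ⟨_, ⟨⟨g, hg⟩, rfl⟩, rfl⟩

lemma gal_finitary (α : G ≃* G) {x : G} (hx : x ∈ gal α) :
    ∃ T : Set G, T.Finite ∧ ∀ H : Subgroup G, T ⊆ H → x ∈ galS α H := by
  unfold gal at hx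
  induction hx using Subgroup.closure_induction with
  | mem x hx =>
    obtain ⟨g, rfl⟩ := hx
    exact ⟨{g}, Set.finite_singleton g, fun H hH =>
      Subgroup.subset_closure ⟨g, hH rfl, rfl⟩⟩
  | one => exact ⟨∅, Set.finite_empty, fun H _ => Subgroup.one_mem _⟩
  | mul x y _ _ hx hy =>
    obtain ⟨T, hT, h1⟩ := hx
    obtain ⟨T', hT', h2⟩ := hy
    exact ⟨T ∪ T', hT.union hT', fun H hH => Subgroup.mul_mem _
      (h1 H (Set.subset_union_left.trans hH)) (h2 H (Set.subset_union_right.trans hH))⟩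
  | inv x _ hx =>
    obtain ⟨T, hT, h1⟩ := hx
    exact ⟨T, hT, fun H hH => Subgroup.inv_mem _ (h1 H hH)⟩

lemma comm_finitary (α : G ≃* G) {x : G} (hx : x ∈ ⁅gal α, gal α⁆) :
    ∃ T : Set G, T.Finite ∧ ∀ H : Subgroup G, T ⊆ H → x ∈ ⁅galS α H, galS α H⁆ := by
  rw [Subgroup.commutator_def] at hx
  induction hx using Subgroup.closure_induction with
  | mem x hx =>
    obtain ⟨a, ha, b, hb, rfl⟩ := hx
    obtain ⟨T, hT, h1⟩ := gal_finitary α ha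
    obtain ⟨T', hT', h2⟩ := gal_finitary α hb
    exact ⟨T ∪ T', hT.union hT', fun H hH => Subgroup.commutator_mem_commutator
      (h1 H (Set.subset_union_left.trans hH)) (h2 H (Set.subset_union_right.trans hH))⟩
  | one => exact ⟨∅, Set.finite_empty, fun H _ => Subgroup.one_mem _⟩
  | mul x y _ _ hx hy =>
    obtain ⟨T, hT, h1⟩ := hx
    obtain ⟨T', hT', h2⟩ := hy
    exact ⟨T ∪ T', hT.union hT', fun H hH => Subgroup.mul_mem _
      (h1 H (Set.subset_union_left.trans hH)) (h2 H (Set.subset_union_right.trans hH))⟩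
  | inv x _ hx =>
    obtain ⟨T, hT, h1⟩ := hx
    exact ⟨T, hT, fun H hH => Subgroup.inv_mem _ (h1 H hH)⟩

lemma card_le_of_finsets {X : Type*} {k : ℕ} (h : ∀ t : Finset X, t.card ≤ k) :
    Finite X ∧ Nat.card X ≤ k := by
  have hf : Finite X := by
    by_contra hinf
    rw [not_finite_iff_infinite] at hinf
    obtain ⟨t, ht⟩ := Infinite.exists_subset_card_eq X (k + 1)
    have := h t
    omega
  refine ⟨hf, ?_⟩
  have := Fintype.ofFinite X
  rw [Nat.card_eq_fintype_card]
  exact h Finset.univ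

/-- The full result, with genuine finiteness of the index and of the derived subgroup. -/
theorem strong_form (α : G ≃* G) (hα : ∀ g, α (α g) = g) (hA : {g : G | α g = g}.Finite)
    {n m : ℕ} (hm : 1 ≤ m) (hG : ∀ g : G, g ^ m = 1) (hn : {g : G | α g = g}.ncard ≤ n) :
    ((gal α).FiniteIndex ∧ (gal α).index ≤ n) ∧
      (Finite ↥⁅gal α, gal α⁆ ∧ Nat.card ↥⁅gal α, gal α⁆ ≤ finB n) := by
  classical
  constructor
  · have key : Finite (G ⧸ gal α) ∧ Nat.card (G ⧸ gal α) ≤ n := by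
      apply card_le_of_finsets
      intro t
      obtain ⟨H, hHf, hTH, hH⟩ := locfin α hα hA hm hG
        (Quotient.out '' (t : Set (G ⧸ gal α))) (t.finite_toSet.image _)
      have hi := index_gal (resAut α hα H hH) (resAut_fix α hα H hH hA hn).2
      refine le_trans ?_ hi
      have : ∀ q : t, Quotient.out (q : G ⧸ gal α) ∈ H := fun q => hTH ⟨q, q.2, rfl⟩
      rw [← Nat.card_eq_finsetCard t]
      refine Nat.card_le_card_of_injective
        (fun q : t => ((⟨Quotient.out (q : G ⧸ gal α), this q⟩ : H) :
          H ⧸ gal (resAut α hα H hH))) ?_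
      intro q r hqr
      have h1 := QuotientGroup.eq.1 hqr
      have h2 : (gal (resAut α hα H hH)).map H.subtype ≤ gal α := by
        rw [map_gal_res]
        apply Subgroup.closure_mono
        rintro _ ⟨g, _, rfl⟩
        exact ⟨g, rfl⟩
      have h3 := h2 ⟨_, h1, rfl⟩
      apply Subtype.ext
      rw [← QuotientGroup.out_eq' (q : G ⧸ gal α), ← QuotientGroup.out_eq' (r : G ⧸ gal α)]
      exact QuotientGroup.eq.2 h3
    have := key.1
    exact ⟨Subgroup.finiteIndex_of_finite_quotient, key.2⟩
  · apply card_le_of_finsets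
    intro t
    choose T hT hTH using fun x : ↥⁅gal α, gal α⁆ => comm_finitary α x.2
    obtain ⟨H, hHf, hsub, hH⟩ := locfin α hα hA hm hG
      (⋃ x ∈ (t : Set ↥⁅gal α, gal α⁆), T x) (t.finite_toSet.biUnion fun x _ => hT x)
    have hc := finite_case (resAut α hα H hH) (fun h => Subtype.ext (hα h))
      (resAut_fix α hα H hH hA hn).2
    refine le_trans ?_ hc
    have hcm : Nat.card ↥(Subgroup.map H.subtype
        ⁅gal (resAut α hα H hH), gal (resAut α hα H hH)⁆) =
        Nat.card ↥⁅gal (resAut α hα H hH), gal (resAut α hα H hH)⁆ :=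
      Subgroup.card_map_of_injective H.subtype_injective
    rw [← hcm, Subgroup.map_commutator, map_gal_res]
    have hfin : Finite ↥⁅galS α H, galS α H⁆ := by
      rw [← map_gal_res α hα H hH, ← Subgroup.map_commutator]
      exact Set.Finite.to_subtype ((Set.toFinite _).image H.subtype)
    have hmem : ∀ x : t, ((x : ↥⁅gal α, gal α⁆) : G) ∈ ⁅galS α H, galS α H⁆ := by
      intro x
      apply hTH x H
      exact (Set.subset_biUnion_of_mem (u := T) x.2).trans hsub
    rw [← Nat.card_eq_finsetCard t]
    refine Nat.card_le_card_of_injective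
      (fun x : t => (⟨((x : ↥⁅gal α, gal α⁆) : G), hmem x⟩ : ↥⁅galS α H, galS α H⁆)) ?_
    intro x y h
    have h' : ((x : ↥⁅gal α, gal α⁆) : G) = ((y : ↥⁅gal α, gal α⁆) : G) := by
      have := congrArg (fun z : ↥⁅galS α H, galS α H⁆ => (z : G)) h
      exact this
    exact Subtype.ext (Subtype.ext h')

end PartFour

theorem bounded_exponent_involutory_automorphism_commutator_derived_bounded :
    ∃ f : ℕ × ℕ → ℕ, ∀ n m : ℕ, 1 ≤ m → ∀ (G : Type) [Group G],
      (∀ g : G, g ^ m = 1) →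
      ∀ α : G ≃* G, (∀ g, α (α g) = g) →
      {g : G | α g = g}.Finite → {g : G | α g = g}.ncard ≤ n →
      (Subgroup.closure {x : G | ∃ g : G, g⁻¹ * α g = x}).index ≤ n ∧
      Nat.card ↥⁅Subgroup.closure {x : G | ∃ g : G, g⁻¹ * α g = x},
                 Subgroup.closure {x : G | ∃ g : G, g⁻¹ * α g = x}⁆ ≤ f (n, m) := by
  refine ⟨fun p => finB p.1, ?_⟩
  intro n m hm G _ hG α hα hA hn
  have h := strong_form α hα hA hm hG hn
  exact ⟨h.1.2, h.2.2⟩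
end

section
/- There exists a function f : ℕ → ℕ such that for every natural number n the following holds: if G is a finite group admitting an automorphism α with α ∘ α = id such that Fix(α) has at most n elements, then there is a characteristic subgroup H of G such that the quotient G/H has order at most f(n) and the derived subgroup H' has order at most f(n). -/
namespace InvAut
open Subgroup

noncomputable def cls {G : Type*} [Group G] [Fintype G] [DecidableEq G] (a : G) : Finset G :=
  Finset.univ.image fun g : G => g * a * g⁻¹

variable {G : Type*} [Group G] [Fintype G] [DecidableEq G]

lemma mem_cls (a g : G) : g * a * g⁻¹ ∈ cls a := by simp [cls]

lemma mem_cls_iff (a w : G) : w ∈ cls a ↔ ∃ g : G, g * a * g⁻¹ = w := by simp [cls]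

lemma card_cls (a : G) : (cls a).card = (centralizer {a} : Subgroup G).index := by
  have h := MulAction.index_stabilizer (ConjAct G) a
  have h2 : (MulAction.orbit (ConjAct G) a) = (cls a : Set G) := by
    ext w
    simp only [MulAction.mem_orbit_iff, Finset.mem_coe, mem_cls_iff, ConjAct.smul_def]
    exact ⟨fun ⟨g, hg⟩ => ⟨ConjAct.ofConjAct g, hg⟩, fun ⟨g, hg⟩ => ⟨ConjAct.toConjAct g, hg⟩⟩
  rw [h2, Set.ncard_coe_finset] at h
  rw [← h]
  have h3 : (centralizer {a} : Subgroup G) =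
      (MulAction.stabilizer (ConjAct G) a).comap (ConjAct.toConjAct (G := G)).toMonoidHom := by
    ext x
    simp [mem_centralizer_iff, ConjAct.smul_def, eq_comm, eq_mul_inv_iff_mul_eq]
  rw [h3, Subgroup.index_comap_of_surjective _ (ConjAct.toConjAct (G := G)).surjective]

lemma cls_mul (a b : G) : (cls (a * b)).card ≤ (cls a).card * (cls b).card := by
  rw [← Finset.card_product]
  refine (Finset.card_le_card (t := (cls a ×ˢ cls b).image fun p => p.1 * p.2) ?_).trans
    Finset.card_image_le
  intro w hw
  obtain ⟨g, rfl⟩ := (mem_cls_iff _ _).1 hw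
  refine Finset.mem_image.2 ⟨(g * a * g⁻¹, g * b * g⁻¹), ?_, by group⟩
  simp [mem_cls]

lemma cls_inv (a : G) : (cls a⁻¹).card ≤ (cls a).card := by
  refine (Finset.card_le_card (t := (cls a).image fun p => p⁻¹) ?_).trans
    Finset.card_image_le
  intro w hw
  obtain ⟨g, rfl⟩ := (mem_cls_iff _ _).1 hw
  exact Finset.mem_image.2 ⟨g * a * g⁻¹, mem_cls _ _, by group⟩

lemma cls_equiv (φ : G ≃* G) (a : G) : (cls (φ a)).card ≤ (cls a).card := by
  refine (Finset.card_le_card (t := (cls a).image fun p => φ p) ?_).trans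
    Finset.card_image_le
  intro w hw
  obtain ⟨g, rfl⟩ := (mem_cls_iff _ _).1 hw
  exact Finset.mem_image.2 ⟨φ.symm g * a * (φ.symm g)⁻¹, mem_cls _ _, by simp⟩

/-- BFC -/
lemma bfc (m : ℕ) (hm : ∀ a : G, (cls a).card ≤ m) :
    Nat.card (commutatorSet G) ≤ m ^ m * (m * (m * m)) := by
  obtain ⟨a, -, ha⟩ := Finset.exists_max_image Finset.univ (fun a : G => (cls a).card) ⟨1, by simp⟩
  have hb : ∀ w : cls a, ∃ b : G, b * a * b⁻¹ = w := fun w => (mem_cls_iff _ _).1 w.2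
  choose b hb using hb
  let U : Subgroup G := ⨅ w : cls a, centralizer {b w}
  have m1 : 1 ≤ m := (Finset.card_pos.2 ⟨_, mem_cls (1 : G) 1⟩).trans_le (hm 1)
  have hU : U.index ≤ m ^ m := by
    refine (Subgroup.index_iInf_le _).trans ?_
    refine (Finset.prod_le_pow_card _ _ m fun w _ => ?_).trans ?_
    · rw [← card_cls]; exact hm _
    · exact Nat.pow_le_pow_right m1 (by simpa using hm a)
  have key : ∀ u ∈ U, ∀ g : G, ∃ w ∈ cls a, g * (a * u) * g⁻¹ = w * u := by
    intro u hu g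
    have hs : (cls a).image (fun w => w * u) ⊆ cls (a * u) := by
      intro x hx
      obtain ⟨w, hw, rfl⟩ := Finset.mem_image.1 hx
      refine (mem_cls_iff _ _).2 ⟨b ⟨w, hw⟩, ?_⟩
      have h1 : b ⟨w, hw⟩ * u = u * b ⟨w, hw⟩ := by
        have := (Subgroup.mem_iInf.1 hu) ⟨w, hw⟩
        simpa [mem_centralizer_iff] using this
      have h2 := hb ⟨w, hw⟩
      simp only at h2
      generalize b ⟨w, hw⟩ = c at h1 h2 ⊢
      rw [← h2]
      have h3 : u * c⁻¹ = c⁻¹ * u := by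
        rw [eq_inv_mul_iff_mul_eq, ← mul_assoc, h1, mul_assoc, mul_inv_cancel, mul_one]
      simp only [mul_assoc, h3]
    have he := Finset.eq_of_subset_of_card_le hs (by
      rw [Finset.card_image_of_injective _ (mul_left_injective u)]
      exact ha _ (Finset.mem_univ _))
    have := mem_cls (a * u) g
    rw [← he] at this
    obtain ⟨w, hw, h⟩ := Finset.mem_image.1 this
    exact ⟨w, hw, h.symm⟩
  classical
  let S : Finset G := (Finset.univ : Finset (G ⧸ U)).biUnion fun t =>
    (cls t.out ×ˢ (cls a ×ˢ cls a)).image fun p => p.1 * (p.2.1⁻¹ * p.2.2) * (t.out)⁻¹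
  have hS : S.card ≤ m ^ m * (m * (m * m)) := by
    refine (Finset.card_biUnion_le_card_mul _ _ (m * (m * m)) fun t _ => ?_).trans ?_
    · refine Finset.card_image_le.trans ?_
      rw [Finset.card_product, Finset.card_product]
      exact Nat.mul_le_mul (hm _) (Nat.mul_le_mul (hm _) (hm _))
    · refine Nat.mul_le_mul_right _ ?_
      rw [Finset.card_univ, ← Nat.card_eq_fintype_card]
      exact hU
  have hsub : commutatorSet G ⊆ (S : Set G) := by
    rintro _ ⟨g, x, rfl⟩
    obtain ⟨v, hv⟩ := QuotientGroup.mk_out_eq_mul U x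
    obtain ⟨w, hw, h⟩ := key (v : G)⁻¹ (U.inv_mem v.2) g
    set t : G := (QuotientGroup.mk x : G ⧸ U).out with ht
    have hx : x = t * (v : G)⁻¹ := by rw [hv]; group
    refine Finset.mem_coe.2 (Finset.mem_biUnion.2 ⟨(QuotientGroup.mk x : G ⧸ U), Finset.mem_univ _,
      Finset.mem_image.2 ⟨(g * t * g⁻¹, g * a * g⁻¹, w), ?_, ?_⟩⟩)
    · simp [mem_cls, hw, ht]
    · have hw' : w = g * (a * (v : G)⁻¹) * g⁻¹ * v := by rw [h]; group
      simp only
      rw [← ht, hw', hx, commutatorElement_def]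
      group
  rw [Nat.card_coe_set_eq]
  exact (Set.ncard_le_ncard hsub (Finset.finite_toSet S)).trans (by rwa [Set.ncard_coe_finset])

noncomputable def Z (G : Type*) [Group G] [Fintype G] [DecidableEq G] (m : ℕ) : Finset G :=
  Finset.univ.filter fun g : G => (cls g).card ≤ m

lemma mem_Z {m : ℕ} {g : G} : g ∈ Z G m ↔ (cls g).card ≤ m := by simp [Z]

lemma mul_mem_Z {m k : ℕ} {g h : G} (hg : g ∈ Z G m) (hh : h ∈ Z G k) : g * h ∈ Z G (m * k) :=
  mem_Z.2 ((cls_mul g h).trans (Nat.mul_le_mul (mem_Z.1 hg) (mem_Z.1 hh)))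

lemma inv_mem_Z {m : ℕ} {g : G} (hg : g ∈ Z G m) : g⁻¹ ∈ Z G m :=
  mem_Z.2 ((cls_inv g).trans (mem_Z.1 hg))

lemma Z_mono {m k : ℕ} (h : m ≤ k) : Z G m ⊆ Z G k := fun _ hx => mem_Z.2 ((mem_Z.1 hx).trans h)

def ex : ℕ → ℕ
  | 0 => 1
  | i + 1 => 2 * ex i + 3

lemma exists_stable (N : ℕ) (hN : 1 ≤ N) (h : Fintype.card G ≤ N * (Z G N).card) :
    ∃ i ≤ N, Z G (N ^ (2 * ex i + 2)) ⊆ Z G (N ^ (ex i + 1)) := by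
  by_contra! hc
  have key : ∀ i ≤ N, (i + 1) * Fintype.card G ≤ N * (Z G (N ^ (ex i))).card := by
    intro i
    induction i with
    | zero => intro _; simpa [ex] using h
    | succ i ih =>
      intro hi
      have ih := ih (by omega)
      obtain ⟨g, hg1, hg2⟩ := Finset.not_subset.1 (hc i (by omega))
      have hd : Disjoint (Z G (N ^ ex i)) ((Z G N).image (g * ·)) := by
        rw [Finset.disjoint_left]
        intro z hz hz'
        obtain ⟨x, hx, rfl⟩ := Finset.mem_image.1 hz'
        apply hg2
        have := mul_mem_Z hz (inv_mem_Z hx)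
        simpa [pow_succ] using this
      have hs : Z G (N ^ ex i) ∪ (Z G N).image (g * ·) ⊆ Z G (N ^ ex (i + 1)) := by
        apply Finset.union_subset
        · exact Z_mono (Nat.pow_le_pow_right hN (by simp only [ex]; omega))
        · intro z hz
          obtain ⟨x, hx, rfl⟩ := Finset.mem_image.1 hz
          have := mul_mem_Z hg1 hx
          rwa [← pow_succ] at this
      have hcard := Finset.card_le_card hs
      rw [Finset.card_union_of_disjoint hd,
        Finset.card_image_of_injective _ (mul_right_injective g)] at hcard
      have := Nat.mul_le_mul_left N hcard
      rw [mul_add] at this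
      rw [add_mul (i + 1) 1]
      omega
  have h1 := key N le_rfl
  have h2 := Nat.mul_le_mul_left N (Finset.card_le_univ (Z G (N ^ ex N)))
  have h3 : 0 < Fintype.card G := Fintype.card_pos
  rw [add_mul] at h1
  omega

def ZS (m : ℕ) (h1 : 1 ≤ m) (h : Z G (m * m) ⊆ Z G m) : Subgroup G where
  carrier := Z G m
  mul_mem' hx hy := h (mul_mem_Z hx hy)
  one_mem' := mem_Z.2 (by
    refine le_trans ?_ h1
    refine Finset.card_le_one.2 fun x hx y hy => ?_
    obtain ⟨g, rfl⟩ := (mem_cls_iff _ _).1 hx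
    obtain ⟨g, rfl⟩ := (mem_cls_iff _ _).1 hy
    simp)
  inv_mem' hx := inv_mem_Z hx

lemma many_inverted (α : G ≃* G) (hα : ∀ g, α (α g) = g) (n : ℕ)
    (hn : Nat.card {g : G // α g = g} ≤ n) :
    Fintype.card G ≤ n * (Finset.univ.filter fun g : G => α g = g⁻¹).card := by
  rw [← Finset.card_univ]
  refine Finset.card_le_mul_card_image_of_maps_to (f := fun g => g⁻¹ * α g) ?_ n ?_
  · intro g _
    simp [hα]
  · intro b _
    rcases Finset.eq_empty_or_nonempty
      (Finset.univ.filter fun g : G => g⁻¹ * α g = b) with he | ⟨g0, hg0⟩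
    · rw [he]; simp
    · refine le_trans ?_ hn
      rw [Nat.card_eq_fintype_card, Fintype.card_subtype]
      refine Finset.card_le_card_of_injOn (fun g => g * g0⁻¹) ?_
        ((mul_left_injective _).injOn)
      intro g hg
      simp only [Finset.coe_filter, Finset.mem_filter, Finset.mem_univ, true_and,
        Set.mem_ofPred_eq] at hg hg0 ⊢
      rw [inv_mul_eq_iff_eq_mul] at hg hg0
      rw [map_mul, map_inv, hg, hg0]
      group

lemma sq_inverted_le (α : G ≃* G) :
    (Finset.univ.filter fun g : G => α g = g⁻¹).card ^ 2 ≤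
      ∑ z : G, Nat.card (centralizer {z} : Subgroup G) := by
  classical
  set I := Finset.univ.filter fun g : G => α g = g⁻¹ with hI
  rw [sq, ← Finset.card_product, Finset.card_eq_sum_card_fiberwise (f := fun p => p.1⁻¹ * p.2)
    (t := Finset.univ) (fun _ _ => Finset.mem_coe.2 (Finset.mem_univ _))]
  refine Finset.sum_le_sum fun z _ => ?_
  rcases Finset.eq_empty_or_nonempty
      ((I ×ˢ I).filter fun p : G × G => p.1⁻¹ * p.2 = z) with he | ⟨p0, hp0⟩
  · rw [he]; simp
  · rw [← SetLike.coe_sort_coe, Nat.card_coe_set_eq, Set.ncard_eq_toFinset_card']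
    have key : ∀ p : G × G, p ∈ ((I ×ˢ I).filter fun p : G × G => p.1⁻¹ * p.2 = z) →
        p.1 * z⁻¹ = α z * p.1 ∧ p.2 = p.1 * z := by
      rintro ⟨x, y⟩ hp
      simp only [hI, Finset.mem_filter, Finset.mem_product, Finset.mem_univ, true_and] at hp ⊢
      obtain ⟨⟨hx, hy⟩, rfl⟩ := hp
      constructor
      · simp [hx, hy, mul_assoc]
      · group
    refine Finset.card_le_card_of_injOn (fun p => p0.1⁻¹ * p.1) ?_ ?_
    · intro p hp
      have h1 := (key p hp).1
      have h0 := (key p0 hp0).1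
      simp only [Set.coe_toFinset, SetLike.mem_coe, mem_centralizer_singleton_iff]
      have h0' : α z = p0.1 * z⁻¹ * p0.1⁻¹ := by rw [h0]; group
      rw [h0'] at h1
      have h2 : p.1 = p0.1 * z⁻¹ * p0.1⁻¹ * p.1 * z := by rw [← h1]; group
      have h3 : z * (p0.1⁻¹ * p.1) = p0.1⁻¹ * p.1 * z := by
        conv_lhs => rw [h2]
        group
      first | exact h3 | exact h3.symm
    · intro p hp q hq h
      have h1 : p.1 = q.1 := mul_left_cancel h
      exact Prod.ext h1 (by rw [(key p hp).2, (key q hq).2, h1])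

lemma many_small (α : G ≃* G) (hα : ∀ g, α (α g) = g) (n : ℕ)
    (hn : Nat.card {g : G // α g = g} ≤ n) :
    Fintype.card G ≤ (2 * n ^ 2) * (Z G (2 * n ^ 2)).card := by
  set N := 2 * n ^ 2 with hN
  have h1 := many_inverted α hα n hn
  have h2 := sq_inverted_le α
  set I := Finset.univ.filter fun g : G => α g = g⁻¹
  set c := Fintype.card G with hc
  have hcp : 0 < c := Fintype.card_pos
  have h3 : ∀ z : G, N * Nat.card (centralizer {z} : Subgroup G) ≤
      c + if z ∈ Z G N then N * c else 0 := by
    intro z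
    have hm := Subgroup.card_mul_index (centralizer {z} : Subgroup G)
    rw [← card_cls, Nat.card_eq_fintype_card (α := G), ← hc] at hm
    split_ifs with hz
    · refine le_trans (Nat.mul_le_mul_left N ?_) (Nat.le_add_left _ _)
      rw [← hm]
      exact Nat.le_mul_of_pos_right _ (Finset.card_pos.2 ⟨_, mem_cls z 1⟩)
    · rw [mem_Z, not_le] at hz
      rw [← hm, mul_comm N, add_zero]
      exact Nat.mul_le_mul_left _ hz.le
  have h4 : N * ∑ z : G, Nat.card (centralizer {z} : Subgroup G) ≤
      c * c + (Z G N).card * (N * c) := by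
    rw [Finset.mul_sum]
    refine (Finset.sum_le_sum fun z _ => h3 z).trans ?_
    rw [Finset.sum_add_distrib]
    simp [hc]
  have h5 : 2 * (c * c) ≤ N * I.card ^ 2 := by
    have := Nat.mul_le_mul h1 h1
    rw [hN]; nlinarith
  have h6 : 2 * (c * c) ≤ c * c + (Z G N).card * (N * c) :=
    h5.trans ((Nat.mul_le_mul_left N h2).trans h4)
  have h7 : c * c ≤ (N * (Z G N).card) * c := by nlinarith
  exact Nat.le_of_mul_le_mul_right h7 hcp

noncomputable def bd (m : ℕ) : ℕ :=
  ∑ k ∈ Finset.range (m ^ m * (m * (m * m)) + 1), cardCommutatorBound k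

lemma card_comm_le (H : Subgroup G) (m : ℕ) (h : ∀ x ∈ H, (cls x).card ≤ m) :
    Nat.card ↥⁅H, H⁆ ≤ bd m := by
  classical
  have h1 : ∀ x : H, (cls x).card ≤ m := by
    intro x
    refine le_trans ?_ (h x x.2)
    refine Finset.card_le_card_of_injOn (fun y => (y : G)) ?_ Subtype.val_injective.injOn
    intro y hy
    obtain ⟨g, rfl⟩ := (mem_cls_iff _ _).1 (Finset.mem_coe.1 hy)
    exact mem_cls (x : G) (g : G)
  have h2 := bfc m h1
  have h3 := card_commutator_le_of_finite_commutatorSet H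
  rw [← Subgroup.map_subtype_commutator, Subgroup.card_map_of_injective H.subtype_injective]
  refine h3.trans ?_
  exact Finset.single_le_sum (f := cardCommutatorBound) (fun _ _ => Nat.zero_le _)
    (Finset.mem_range.2 (Nat.lt_succ_of_le h2))

end InvAut

/-- There is a function `f : ℕ → ℕ` such that any finite group `G` with an involutory
automorphism fixing at most `n` elements has a characteristic subgroup `H` with
`[G : H] ≤ f n` and `|H'| ≤ f n`. -/
theorem finite_group_involutory_automorphism_finiteByAbelianByFinite :
    ∃ f : ℕ → ℕ, ∀ n : ℕ, ∀ (G : Type) [Group G] [Finite G],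
      ∀ α : G ≃* G, (∀ g, α (α g) = g) →
      Nat.card {g : G // α g = g} ≤ n →
      ∃ H : Subgroup G, H.Characteristic ∧ H.index ≤ f n ∧
        Nat.card ↥⁅H, H⁆ ≤ f n := by
  classical
  refine ⟨fun n => 2 * n ^ 2 + ∑ i ∈ Finset.range (2 * n ^ 2 + 1),
    InvAut.bd ((2 * n ^ 2) ^ (InvAut.ex i + 1)), ?_⟩
  intro n G _ _ α hα hn
  have := Fintype.ofFinite G
  have hn1 : 1 ≤ n := by
    have : Nonempty {g : G // α g = g} := ⟨⟨1, map_one α⟩⟩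
    exact (Nat.card_pos (α := {g : G // α g = g})).trans_le hn
  have hsm := InvAut.many_small α hα n hn
  set N := 2 * n ^ 2 with hN
  have hN1 : 1 ≤ N := by have := Nat.one_le_pow 2 n hn1; omega
  obtain ⟨i, hi, hst⟩ := InvAut.exists_stable N hN1 hsm
  have hm1 : 1 ≤ N ^ (InvAut.ex i + 1) := Nat.one_le_pow _ _ hN1
  have hst' : InvAut.Z G (N ^ (InvAut.ex i + 1) * N ^ (InvAut.ex i + 1)) ⊆
      InvAut.Z G (N ^ (InvAut.ex i + 1)) := by
    rw [← pow_add]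
    convert hst using 3
    ring
  let H : Subgroup G := InvAut.ZS _ hm1 hst'
  have hmem : ∀ x, x ∈ H ↔ x ∈ InvAut.Z G (N ^ (InvAut.ex i + 1)) := fun x => Iff.rfl
  refine ⟨H, ?_, ?_, ?_⟩
  · rw [Subgroup.characteristic_iff_le_comap]
    intro φ x hx
    exact InvAut.mem_Z.2 ((InvAut.cls_equiv φ x).trans (InvAut.mem_Z.1 hx))
  · refine le_trans ?_ (Nat.le_add_right _ _)
    have h1 := H.card_mul_index
    have h2 : Nat.card H = (InvAut.Z G (N ^ (InvAut.ex i + 1))).card := by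
      change Nat.card ((InvAut.Z G (N ^ (InvAut.ex i + 1)) : Finset G) : Set G) = _
      rw [Nat.card_coe_set_eq, Set.ncard_coe_finset]
    have h3 : (InvAut.Z G N).card ≤ Nat.card H := by
      rw [h2]
      exact Finset.card_le_card (InvAut.Z_mono (Nat.le_self_pow (by omega) N))
    have h4 : Nat.card H * H.index ≤ Nat.card H * N := by
      rw [h1, Nat.card_eq_fintype_card, mul_comm]
      exact hsm.trans (Nat.mul_le_mul_left N h3)
    exact Nat.le_of_mul_le_mul_left h4 Nat.card_pos
  · refine le_trans ?_ (Nat.le_add_left _ _)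
    refine (InvAut.card_comm_le H (N ^ (InvAut.ex i + 1)) fun x hx => InvAut.mem_Z.1 hx).trans ?_
    exact Finset.single_le_sum (f := fun i => InvAut.bd (N ^ (InvAut.ex i + 1)))
      (fun _ _ => Nat.zero_le _) (Finset.mem_range.2 (Nat.lt_succ_of_le hi))
end
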